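/- arXiv:2201.01043 — 7 statements merged into one kernel-verified Lean document; each statement's English description precedes it below -/
import Mathlib

section
/- Let k be a positive integer and let G be a connected K_{1,4}-free simple graph of order n. If every independent set of k+3 vertices in G has degree sum at least n−k, then G has a spanning tree with at most k branch vertices. -/
open SimpleGraph Finset List

open scoped Classical

variable {V : Type*}

/-- `G` contains no induced copy of `K_{1,4}` (a star with four edges). -/
def K14Free (G : SimpleGraph V) : Prop :=
  ¬ ∃ c a b d e : V, a ≠ b ∧ a ≠ d ∧ a ≠ e ∧ b ≠ d ∧ b ≠ e ∧ d ≠ e ∧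
    G.Adj c a ∧ G.Adj c b ∧ G.Adj c d ∧ G.Adj c e ∧
    ¬G.Adj a b ∧ ¬G.Adj a d ∧ ¬G.Adj a e ∧ ¬G.Adj b d ∧ ¬G.Adj b e ∧ ¬G.Adj d e

/-- `s` is an independent set of vertices of `G`. -/
def IsIndepFinset (G : SimpleGraph V) (s : Finset V) : Prop :=
  ∀ u ∈ s, ∀ v ∈ s, u ≠ v → ¬G.Adj u v

/-- The set `L(T)` of leaves (vertices of degree one) of `T`. -/
noncomputable def leafSet [Fintype V] (T : SimpleGraph V) : Finset V :=
  Finset.univ.filter fun v => T.degree v = 1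

/-- The set `B(T)` of branch vertices (vertices of degree at least three) of `T`. -/
noncomputable def branchSet [Fintype V] (T : SimpleGraph V) : Finset V :=
  Finset.univ.filter fun v => 3 ≤ T.degree v

/-- `v` is an oblique neighbor of the edge `e` with respect to the (spanning) tree `T` of `G`:
`e = s(a,b)` where `b` is the endpoint of `e` farthest from `v` in `T`, and `v b ∈ E(G)`. -/
def IsObliqueNbr (G T : SimpleGraph V) (e : Sym2 V) (v : V) : Prop :=
  ∃ a b : V, e = s(a, b) ∧ T.dist v a < T.dist v b ∧ G.Adj v b

/-- The number of vertices of the reducible stem `R_Stem(T)` of `T`: a vertex `v` survives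
iff for every leaf `x` of `T` the (unique) path of `T` from `x` to `v` contains a branch
vertex (so exactly the vertices not lying strictly before the first branch vertex on the
path leaving some leaf). -/
noncomputable def rstemCard [Fintype V] (T : SimpleGraph V) : ℕ :=
  {v : V | ∀ x : V, T.degree x = 1 → ∀ p : T.Walk x v, p.IsPath →
    ∃ w ∈ p.support, 3 ≤ T.degree w}.ncard


namespace KB

/-- The component of `a` in `T` minus the edge `ab`. -/
def Side (T : SimpleGraph V) (a b v : V) : Prop := (T.deleteEdges {s(a, b)}).Reachable a v

lemma side_self (T : SimpleGraph V) (a b : V) : Side T a b a := Reachable.refl _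

lemma not_side {T : SimpleGraph V} (hT : T.IsTree) {a b : V} (h : T.Adj a b) : ¬ Side T a b b := by
  have := isAcyclic_iff_forall_adj_isBridge.1 hT.isAcyclic h
  rw [isBridge_iff] at this
  exact this

lemma side_congr {T : SimpleGraph V} {a b u w : V} (h : T.Adj u w) (hne : s(u, w) ≠ s(a, b)) :
    Side T a b u ↔ Side T a b w := by
  have : (T.deleteEdges {s(a, b)}).Adj u w := by
    rw [deleteEdges_adj]; exact ⟨h, by simpa using hne⟩
  exact ⟨fun h' => h'.trans this.reachable, fun h' => h'.trans this.symm.reachable⟩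

lemma side_cross {T : SimpleGraph V} (hT : T.IsTree) {a b u w : V} (hab : T.Adj a b)
    (hne : s(u, w) = s(a, b)) : ¬ (Side T a b u ↔ Side T a b w) := by
  have h1 := side_self T a b
  have h2 := not_side hT hab
  rcases Sym2.eq_iff.1 hne with ⟨rfl, rfl⟩ | ⟨rfl, rfl⟩ <;> tauto

lemma side_walk {T : SimpleGraph V} {a b u w : V} (p : T.Walk u w) (hp : s(a, b) ∉ p.edges) :
    Side T a b u ↔ Side T a b w := by
  induction p with
  | nil => rfl
  | cons h p ih =>
    simp only [Walk.edges_cons, List.mem_cons, not_or] at hp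
    exact (side_congr h (Ne.symm hp.1)).trans (ih hp.2)

lemma side_path {T : SimpleGraph V} (hT : T.IsTree) {a b u w : V} (hab : T.Adj a b)
    (p : T.Walk u w) (hp : p.IsTrail) (he : s(a, b) ∈ p.edges) :
    ¬ (Side T a b u ↔ Side T a b w) := by
  induction p with
  | nil => simp at he
  | @cons u v _ h p ih =>
    simp only [Walk.edges_cons, List.mem_cons] at he
    rw [Walk.isTrail_cons] at hp
    by_cases heq : s(a, b) = s(u, v)
    · rw [← heq] at hp
      have := side_walk p hp.2
      have := side_cross hT hab heq.symm
      tauto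
    · have := ih hp.1 (he.resolve_left heq)
      have := side_congr h (Ne.symm heq)
      tauto

/-- Vertices on the same side of all deleted edges stay connected. -/
lemma reach_of_side {T : SimpleGraph V} (hT : T.IsTree) (F : Set (Sym2 V)) {u w : V}
    (h : ∀ e ∈ F, ∃ a b, e = s(a, b) ∧ T.Adj a b ∧ (Side T a b u ↔ Side T a b w)) :
    (T.deleteEdges F).Reachable u w := by
  obtain ⟨p, hp⟩ := (hT.connected u w).exists_isPath
  refine ⟨p.toDeleteEdges F ?_⟩
  intro e he heF
  obtain ⟨a, b, rfl, hab, hs⟩ := h e heF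
  exact side_path hT hab p hp.isTrail he hs

lemma side_or {T : SimpleGraph V} (hT : T.IsTree) {a b : V} (hab : T.Adj a b) (v : V) :
    Side T a b v ∨ Side T b a v := by
  obtain ⟨p⟩ := hT.connected a v
  have key : ∀ {u v : V} (p : T.Walk u v), (Side T a b u ∨ Side T b a u) →
      (Side T a b v ∨ Side T b a v) := by
    intro u v p
    induction p with
    | nil => exact id
    | @cons u w _ h p ih =>
      intro h'
      apply ih
      by_cases heq : s(u, w) = s(a, b)
      · rcases Sym2.eq_iff.1 heq with ⟨rfl, rfl⟩ | ⟨rfl, rfl⟩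
        · exact Or.inr (side_self _ _ _)
        · exact Or.inl (side_self _ _ _)
      · have h1 := side_congr h heq
        have h2 := side_congr h (a := b) (b := a) (by rwa [Sym2.eq_swap (a := b)])
        tauto
  exact key p (Or.inl (side_self _ _ _))

lemma side_not_both {T : SimpleGraph V} (hT : T.IsTree) {a b : V} (hab : T.Adj a b) {v : V}
    (h1 : Side T a b v) (h2 : Side T b a v) : False := by
  apply not_side hT hab
  unfold Side at *
  rw [Sym2.eq_swap] at h2
  exact h1.trans h2.symm

lemma side_compl {T : SimpleGraph V} (hT : T.IsTree) {a b : V} (hab : T.Adj a b) (v : V) :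
    Side T b a v ↔ ¬ Side T a b v :=
  ⟨fun h h' => side_not_both hT hab h' h, fun h => (side_or hT hab v).resolve_left h⟩

/-- If an edge `pq` is disjoint from a side, then the side lies on one side of `pq`. -/
lemma side_const {T : SimpleGraph V} {a b p q w : V}
    (hp : ¬ Side T a b p) (hw : Side T a b w) :
    Side T p q a ↔ Side T p q w := by
  obtain ⟨W⟩ := hw
  have key : ∀ {u v : V} (W : (T.deleteEdges {s(a, b)}).Walk u v), Side T a b u →
      (Side T p q u ↔ Side T p q v) := by
    intro u v W
    induction W with
    | nil => intro _; rfl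
    | @cons u w _ h W ih =>
      intro h'
      have h'' : Side T a b w := h'.trans h.reachable
      rw [← ih h'']
      rw [deleteEdges_adj] at h
      apply side_congr h.1
      intro heq
      rcases Sym2.eq_iff.1 heq with ⟨rfl, rfl⟩ | ⟨rfl, rfl⟩ <;> tauto
  exact key W (side_self _ _ _)

/-- Sides of distinct neighbours of `v` are disjoint. -/
lemma side_nested {T : SimpleGraph V} (hT : T.IsTree) {a b v w : V} (ha : T.Adj a v)
    (_hb : T.Adj b v) (hab : a ≠ b) (hw : Side T a v w) : Side T v b w := by
  have h1 : Side T v b a := by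
    rw [← side_congr (u := v) (w := a) ha.symm]
    · exact side_self _ _ _
    · intro h; rcases Sym2.eq_iff.1 h with ⟨_, h⟩ | ⟨_, h⟩
      · exact hab h
      · exact ha.ne h
  exact (side_const (not_side hT ha) hw).1 h1

lemma exists_next {T : SimpleGraph V} (hT : T.IsTree) {v w : V} (h : v ≠ w) :
    ∃ a, T.Adj a v ∧ Side T a v w := by
  obtain ⟨p, hp⟩ := (hT.connected v w).exists_isPath
  cases p with
  | nil => exact absurd rfl h
  | @cons _ a _ hv p =>
    rw [Walk.cons_isPath_iff] at hp
    refine ⟨a, hv.symm, ?_⟩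
    refine (side_walk p ?_).1 (side_self _ _ _)
    intro he
    exact hp.2 (Walk.snd_mem_support_of_mem_edges _ he)

/-- The neighbour of `v` in the direction of `w`. -/
noncomputable def nxt (T : SimpleGraph V) (v w : V) : V :=
  if h : ∃ a, T.Adj a v ∧ Side T a v w then h.choose else v

lemma nxt_spec {T : SimpleGraph V} (hT : T.IsTree) {v w : V} (h : v ≠ w) :
    T.Adj (nxt T v w) v ∧ Side T (nxt T v w) v w := by
  have h' := exists_next hT h
  unfold nxt
  rw [dif_pos h']
  exact h'.choose_spec

lemma side_unique {T : SimpleGraph V} (hT : T.IsTree) {a b v w : V} (ha : T.Adj a v)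
    (hb : T.Adj b v) (h1 : Side T a v w) (h2 : Side T b v w) : a = b := by
  by_contra h
  exact side_not_both hT hb h2 (side_nested hT ha hb h h1)

end KB

namespace KB

set_option linter.unusedSectionVars false

variable [Fintype V]

/-- Total excess of degrees above two. -/
noncomputable def eps (H : SimpleGraph V) : ℕ := ∑ v, (H.degree v - 2)

/-- `T` minimizes (number of branch vertices, excess) among connected spanning subgraphs. -/
structure Opt (G T : SimpleGraph V) : Prop where
  le : T ≤ G
  conn : T.Connected
  pos : 0 < (branchSet T).card
  min : ∀ H : SimpleGraph V, H ≤ G → H.Connected →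
    (branchSet T).card < (branchSet H).card ∨
      ((branchSet T).card = (branchSet H).card ∧ eps T ≤ eps H)

lemma exists_min (G : SimpleGraph V) (hG : G.Connected) :
    ∃ T : SimpleGraph V, T ≤ G ∧ T.Connected ∧ ∀ H : SimpleGraph V, H ≤ G → H.Connected →
    (branchSet T).card < (branchSet H).card ∨
      ((branchSet T).card = (branchSet H).card ∧ eps T ≤ eps H) := by
  obtain ⟨T, hT, hmin⟩ := Set.exists_min_image {H : SimpleGraph V | H ≤ G ∧ H.Connected}
    (fun H => toLex ((branchSet H).card, eps H)) (Set.toFinite _) ⟨G, le_rfl, hG⟩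
  refine ⟨T, hT.1, hT.2, fun H h1 h2 => ?_⟩
  have := hmin H ⟨h1, h2⟩
  rw [Prod.Lex.toLex_le_toLex] at this
  exact this

lemma branch_mono {H H' : SimpleGraph V} (h : ∀ v, 3 ≤ H'.degree v → H'.degree v ≤ H.degree v) :
    branchSet H' ⊆ branchSet H := by
  intro v hv
  simp only [branchSet, Finset.mem_filter, Finset.mem_univ, true_and] at *
  exact hv.trans (h v hv)

lemma acyclic_of_opt {G T H : SimpleGraph V} (hO : Opt G T) (hH : H ≤ G) (hc : H.Connected)
    (h1 : (branchSet T).card = (branchSet H).card) (h2 : eps H = eps T) : H.IsAcyclic := by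
  have key : ∀ u v, H.Adj u v → ¬ H.IsBridge s(u, v) → H.degree u ≤ 2 := by
    intro u v huv hb
    by_contra hd
    obtain ⟨H', hH'⟩ : ∃ H' : SimpleGraph V, H' = H.deleteEdges {s(u, v)} := ⟨_, rfl⟩
    have hconn : H'.Connected := by
      rw [hH']
      exact hc.connected_delete_edge_of_not_isBridge hb
    have hle : H' ≤ H := by rw [hH']; exact deleteEdges_le _
    have hdle : ∀ w, H'.degree w ≤ H.degree w :=
      fun w => degree_le_of_le hle
    have hlt : H'.degree u < H.degree u := by
      rw [← card_neighborFinset_eq_degree, ← card_neighborFinset_eq_degree]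
      apply Finset.card_lt_card
      rw [Finset.ssubset_iff_of_subset]
      · exact ⟨v, by simpa using huv, by simp [hH']⟩
      · intro w hw
        rw [mem_neighborFinset] at *
        exact hle hw
    have hb' := Finset.card_le_card (branch_mono (H := H) (fun v _ => hdle v))
    have he : eps H' < eps H := by
      unfold eps
      apply Finset.sum_lt_sum
      · intro w _; have := hdle w; omega
      · exact ⟨u, Finset.mem_univ _, by omega⟩
    have := hO.min _ (hle.trans hH) hconn
    omega
  intro u c hcyc
  have hbr : ∀ x y, s(x, y) ∈ c.edges → H.degree x ≤ 2 := by
    intro x y hxy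
    refine key x y (c.adj_of_mem_edges hxy) ?_
    intro hbr
    exact (isBridge_iff_forall_cycle_notMem (c.edges_subset_edgeSet hxy)).1 hbr c hcyc hxy
  have hsup : ∀ x ∈ c.support, H.degree x ≤ 2 ∧ ∀ y, H.Adj x y → y ∈ c.support := by
    intro x hx
    have h2 := hcyc.ncard_neighborSet_toSubgraph_eq_two hx
    have hne : (c.toSubgraph.neighborSet x).Nonempty := by
      rw [← Set.ncard_pos]; omega
    obtain ⟨y, hy⟩ := hne
    have hdx : H.degree x ≤ 2 := by
      refine hbr x y ?_
      have : c.toSubgraph.Adj x y := hy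
      rw [← Subgraph.mem_edgeSet] at this
      simpa using this
    refine ⟨hdx, fun z hz => ?_⟩
    have hsub : c.toSubgraph.neighborSet x ⊆ H.neighborSet x := Subgraph.neighborSet_subset _ _
    have heq : c.toSubgraph.neighborSet x = H.neighborSet x := by
      apply Set.eq_of_subset_of_ncard_le hsub
      rw [h2, ← Nat.card_coe_set_eq, Nat.card_eq_fintype_card, card_neighborSet_eq_degree]
      exact hdx
    have : z ∈ c.toSubgraph.neighborSet x := by rw [heq]; exact hz
    have h3 : c.toSubgraph.Adj x z := this
    have := c.toSubgraph.edge_vert h3.symm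
    simpa using this
  have hall : ∀ x, x ∈ c.support := by
    intro x
    obtain ⟨p⟩ := hc u x
    have : ∀ {a b : V} (p : H.Walk a b), a ∈ c.support → b ∈ c.support := by
      intro a b p
      induction p with
      | nil => exact id
      | cons h p ih => exact fun ha => ih ((hsup _ ha).2 _ h)
    exact this p c.start_mem_support
  have : branchSet H = ∅ := by
    ext v
    have := (hsup v (hall v)).1
    simp [branchSet]; omega
  have hp := hO.pos
  rw [h1, this] at hp
  simp at hp

lemma opt_tree {G T : SimpleGraph V} (hO : Opt G T) : T.IsTree :=
  ⟨hO.conn, acyclic_of_opt hO hO.le hO.conn rfl rfl⟩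

/-- The main exchange principle. -/
lemma exchange {G T H : SimpleGraph V} (hO : Opt G T) (hH : H ≤ G) (hc : H.Connected)
    (hd : ∀ v, H.degree v ≤ max (T.degree v) 2) :
    H.IsTree ∧ ∀ v, 3 ≤ T.degree v → T.degree v ≤ H.degree v := by
  have hb := Finset.card_le_card (branch_mono (H := T) (H' := H)
    (fun v hv => by have := hd v; omega))
  have hle : ∀ v, H.degree v - 2 ≤ T.degree v - 2 := fun v => by have := hd v; omega
  have he : eps H ≤ eps T := Finset.sum_le_sum fun v _ => hle v
  have hm := hO.min H hH hc
  refine ⟨⟨hc, acyclic_of_opt hO hH hc (by omega) (by omega)⟩, fun v hv => ?_⟩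
  by_contra hlt
  have : eps H < eps T := Finset.sum_lt_sum (fun v _ => hle v) ⟨v, Finset.mem_univ _, by omega⟩
  omega

/-- `T` with the edges in `F` removed and those in `A` added. -/
def modG (T : SimpleGraph V) (F A : Finset (Sym2 V)) : SimpleGraph V :=
  T.deleteEdges (F : Set (Sym2 V)) ⊔ fromEdgeSet (A : Set (Sym2 V))

/-- Number of edges of `E` at `v`. -/
noncomputable def cnt (E : Finset (Sym2 V)) (v : V) : ℕ := (E.filter (fun e => v ∈ e)).card

lemma degree_eq_cnt (T : SimpleGraph V) (v : V) : T.degree v = cnt T.edgeFinset v := by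
  rw [← card_incidenceFinset_eq_degree, incidenceFinset_eq_filter]; rfl

lemma degree_mod {T : SimpleGraph V} {F : Finset (Sym2 V)} (hF : F ⊆ T.edgeFinset)
    (A : Finset (Sym2 V)) (v : V) :
    (modG T F A).degree v + cnt F v ≤ T.degree v + cnt A v := by
  rw [degree_eq_cnt, degree_eq_cnt]
  have h1 : (modG T F A).edgeFinset ⊆ (T.edgeFinset \ F) ∪ A := by
    intro e he
    rw [mem_edgeFinset] at he
    simp only [modG, edgeSet_sup, edgeSet_deleteEdges, edgeSet_fromEdgeSet, Set.mem_union,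
      Set.mem_sdiff, Finset.mem_coe] at he
    simp only [Finset.mem_union, Finset.mem_sdiff, mem_edgeFinset]
    tauto
  have h2 : cnt (modG T F A).edgeFinset v ≤ cnt (T.edgeFinset \ F) v + cnt A v := by
    unfold cnt
    refine (Finset.card_le_card (Finset.filter_subset_filter _ h1)).trans ?_
    rw [Finset.filter_union]
    exact Finset.card_union_le _ _
  have h3 : cnt (T.edgeFinset \ F) v + cnt F v = cnt T.edgeFinset v := by
    unfold cnt
    rw [← Finset.card_union_of_disjoint, ← Finset.filter_union, Finset.sdiff_union_of_subset hF]
    exact Finset.disjoint_filter_filter Finset.sdiff_disjoint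
  omega

lemma conn_mod {T : SimpleGraph V} (hT : T.Connected) {F A : Finset (Sym2 V)}
    (h : ∀ a b, s(a, b) ∈ F → (modG T F A).Reachable a b) : (modG T F A).Connected := by
  have := hT.nonempty
  refine ⟨fun u w => ?_⟩
  obtain ⟨p⟩ := hT u w
  induction p with
  | nil => rfl
  | @cons a b _ hab p ih =>
    refine Reachable.trans ?_ ih
    by_cases hF : s(a, b) ∈ F
    · exact h a b hF
    · apply Adj.reachable
      left
      rw [deleteEdges_adj]
      exact ⟨hab, by simpa using hF⟩

lemma mod_le {G T : SimpleGraph V} (hT : T ≤ G) {F A : Finset (Sym2 V)}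
    (h : ∀ a b, s(a, b) ∈ A → G.Adj a b) : modG T F A ≤ G := by
  refine sup_le ((deleteEdges_le _).trans hT) ?_
  intro a b hab
  rw [fromEdgeSet_adj] at hab
  exact h a b hab.1

lemma mod_reach {T : SimpleGraph V} (hT : T.IsTree) {F A : Finset (Sym2 V)} {u w : V}
    (h : ∀ e ∈ F, ∃ a b, e = s(a, b) ∧ T.Adj a b ∧ (Side T a b u ↔ Side T a b w)) :
    (modG T F A).Reachable u w :=
  (reach_of_side hT (F : Set (Sym2 V)) h).mono le_sup_left

lemma mod_adj {T : SimpleGraph V} {F A : Finset (Sym2 V)} {u w : V} (h : s(u, w) ∈ A)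
    (hne : u ≠ w) : (modG T F A).Reachable u w := by
  apply Adj.reachable
  right
  rw [fromEdgeSet_adj]
  exact ⟨h, hne⟩

/-- Contradiction of the first kind: a branch vertex loses degree. -/
lemma kill_deg {G T : SimpleGraph V} (hO : Opt G T) {F A : Finset (Sym2 V)}
    (hF : F ⊆ T.edgeFinset) (hA : ∀ a b, s(a, b) ∈ A → G.Adj a b)
    (hr : ∀ a b, s(a, b) ∈ F → (modG T F A).Reachable a b)
    (hd : ∀ v, cnt A v ≤ cnt F v ∨ (T.degree v = 1 ∧ cnt A v ≤ cnt F v + 1))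
    {s : V} (hs : 3 ≤ T.degree s) (hs' : cnt A s < cnt F s) : False := by
  have h := exchange hO (mod_le hO.le hA) (conn_mod hO.conn hr) (fun v => by
    have h1 := degree_mod hF A v
    have h2 := hd v
    omega)
  have h1 := degree_mod hF A s
  have h2 := h.2 s hs
  omega

/-- Contradiction of the second kind: the new graph has too many edges. -/
lemma kill_cyc {G T : SimpleGraph V} (hO : Opt G T) {F A : Finset (Sym2 V)}
    (hF : F ⊆ T.edgeFinset) (hA : ∀ a b, s(a, b) ∈ A → G.Adj a b)
    (hr : ∀ a b, s(a, b) ∈ F → (modG T F A).Reachable a b)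
    {x y : V} (hxy : G.Adj x y) (hxyT : ¬ T.Adj x y) (hxyA : s(x, y) ∉ A)
    (hd : ∀ v, cnt (insert s(x, y) A) v ≤ cnt F v ∨
      (T.degree v = 1 ∧ cnt (insert s(x, y) A) v ≤ cnt F v + 1)) : False := by
  have hle : modG T F A ≤ modG T F (insert s(x, y) A) := by
    apply sup_le_sup_left
    apply fromEdgeSet_mono
    simp
  have hc := conn_mod hO.conn hr
  have hA' : ∀ a b, s(a, b) ∈ insert s(x, y) A → G.Adj a b := by
    intro a b hab
    rcases Finset.mem_insert.1 hab with h | h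
    · rcases Sym2.eq_iff.1 h with ⟨rfl, rfl⟩ | ⟨rfl, rfl⟩
      · exact hxy
      · exact hxy.symm
    · exact hA a b h
  have h := exchange hO (mod_le hO.le hA') (hc.mono hle) (fun v => by
    have h1 := degree_mod hF (insert s(x, y) A) v
    have h2 := hd v
    omega)
  have h1 := h.1.card_edgeFinset
  have h2 := hc.card_vert_le_card_edgeSet_add_one
  have h3 : (modG T F A).edgeFinset ⊂ (modG T F (insert s(x, y) A)).edgeFinset := by
    rw [Finset.ssubset_iff_of_subset (edgeFinset_mono hle)]
    refine ⟨s(x, y), ?_, ?_⟩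
    · rw [mem_edgeFinset, mem_edgeSet]
      right
      rw [fromEdgeSet_adj]
      exact ⟨by simp, hxy.ne⟩
    · rw [mem_edgeFinset, mem_edgeSet]
      rintro (h | h)
      · exact hxyT ((deleteEdges_le _) h)
      · rw [fromEdgeSet_adj] at h
        exact hxyA h.1
  have h4 := Finset.card_lt_card h3
  rw [Nat.card_eq_fintype_card, Nat.card_eq_fintype_card, ← edgeFinset_card] at h2
  omega

lemma cnt_insert_le (A : Finset (Sym2 V)) (e : Sym2 V) (v : V) :
    cnt (insert e A) v ≤ (if v ∈ e then 1 else 0) + cnt A v := by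
  unfold cnt
  rw [Finset.filter_insert]
  split_ifs
  · have := Finset.card_insert_le e (A.filter (fun e => v ∈ e)); omega
  · omega

lemma cnt_insert_eq {A : Finset (Sym2 V)} {e : Sym2 V} (he : e ∉ A) (v : V) :
    cnt (insert e A) v = (if v ∈ e then 1 else 0) + cnt A v := by
  unfold cnt
  rw [Finset.filter_insert]
  split_ifs
  · rw [Finset.card_insert_of_notMem (by simp [he])]; omega
  · omega

lemma cnt_single (e : Sym2 V) (v : V) : cnt {e} v = (if v ∈ e then 1 else 0) := by
  unfold cnt
  rw [Finset.filter_singleton]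
  split_ifs <;> simp

lemma cnt_empty (v : V) : cnt ∅ v = 0 := by simp [cnt]

/-- indicator -/
noncomputable def ind (a v : V) : ℕ := if v = a then 1 else 0

lemma ind_edge {a b : V} (h : a ≠ b) (v : V) :
    (if v ∈ s(a, b) then 1 else 0) = ind a v + ind b v := by
  unfold ind
  by_cases h1 : v = a
  · subst h1; simp [h]
  · by_cases h2 : v = b
    · subst h2; simp [h1]
    · simp [h1, h2]

end KB

namespace KB

set_option linter.unusedSectionVars false

variable [Fintype V]

lemma leaf_unique {T : SimpleGraph V} {a b c : V} (h : T.degree a = 1) (hb : T.Adj a b)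
    (hc : T.Adj a c) : b = c :=
  (degree_eq_one_iff_existsUnique_adj.1 h).unique hb hc

lemma leaf_side {T : SimpleGraph V} (hT : T.IsTree) {a b w : V} (h : T.degree a = 1)
    (hab : T.Adj a b) (hw : Side T a b w) : w = a := by
  by_contra hne
  obtain ⟨c, hc, hs⟩ := exists_next hT (Ne.symm hne)
  obtain rfl := leaf_unique h hab hc.symm
  exact side_not_both hT hab hw hs

lemma edge_across {T : SimpleGraph V} {a b u w : V} (h : T.Adj u w) (hu : Side T a b u)
    (hw : ¬ Side T a b w) (hab : T.IsTree) (hadj : T.Adj a b) : u = a ∧ w = b := by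
  by_cases heq : s(u, w) = s(a, b)
  · rcases Sym2.eq_iff.1 heq with h | ⟨rfl, rfl⟩
    · exact h
    · exact absurd (side_self _ _ _) hw
  · exact absurd ((side_congr h heq).1 hu) hw

lemma hr_of {H : SimpleGraph V} {F : Finset (Sym2 V)}
    (h : ∀ e ∈ F, ∃ a b, e = s(a, b) ∧ H.Reachable a b) :
    ∀ a b, s(a, b) ∈ F → H.Reachable a b := by
  intro a b hab
  obtain ⟨c, d, hcd, hr⟩ := h _ hab
  rcases Sym2.eq_iff.1 hcd with ⟨rfl, rfl⟩ | ⟨rfl, rfl⟩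
  · exact hr
  · exact hr.symm

lemma hA_of {G : SimpleGraph V} {A : Finset (Sym2 V)}
    (h : ∀ e ∈ A, e ∈ G.edgeSet) : ∀ a b, s(a, b) ∈ A → G.Adj a b :=
  fun _ _ hab => h _ hab

lemma ind_disj {x y : V} (h : x ≠ y) (v : V) : ind x v + ind y v ≤ 1 := by
  unfold ind
  split_ifs with h1 h2
  · exact absurd (h1.symm.trans h2) h
  all_goals omega

lemma ind_leaf {T : SimpleGraph V} {x : V} (h : T.degree x = 1) (v : V) :
    ind x v = 0 ∨ (ind x v = 1 ∧ T.degree v = 1) := by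
  unfold ind
  split_ifs with h1
  · right; subst h1; exact ⟨rfl, h⟩
  · left; rfl

lemma ind_self (x : V) : ind x x = 1 := by simp [ind]

lemma ind_ne {x v : V} (h : x ≠ v) : ind x v = 0 := by simp [ind, Ne.symm h]

/-- Leaves are pairwise non-adjacent in `G`. -/
lemma leaves_indep {G T : SimpleGraph V} (hO : Opt G T) {x y : V} (hx : T.degree x = 1)
    (hy : T.degree y = 1) : ¬ G.Adj x y := by
  intro hxy
  have hT := opt_tree hO
  have hne := hxy.ne
  by_cases h : T.Adj x y
  · have hall : ∀ v, v = x ∨ v = y := by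
      intro v
      rcases side_or hT h v with h' | h'
      · exact Or.inl (leaf_side hT hx h h')
      · exact Or.inr (leaf_side hT hy h.symm h')
    have hp := hO.pos
    rw [Finset.card_pos] at hp
    obtain ⟨v, hv⟩ := hp
    simp only [branchSet, Finset.mem_filter] at hv
    rcases hall v with rfl | rfl <;> omega
  · refine kill_cyc hO (F := ∅) (A := ∅) (by simp) (by simp) (by simp) hxy h (by simp) ?_
    intro v
    have h1 := cnt_insert_le ∅ s(x, y) v
    rw [ind_edge hne, cnt_empty] at h1
    have := ind_disj hne v
    have := ind_leaf hx v
    have := ind_leaf hy v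
    rw [cnt_empty]
    omega

/-- A leaf is not adjacent across an edge whose near end is a branch vertex. -/
lemma no_obl_branch {G T : SimpleGraph V} (hO : Opt G T) {a b x : V} (hab : T.Adj a b)
    (ha : 3 ≤ T.degree a) (hx : T.degree x = 1) (hs : Side T a b x) : ¬ G.Adj x b := by
  intro hxb
  have hT := opt_tree hO
  have hxa : x ≠ a := by rintro rfl; omega
  refine kill_deg hO (F := {s(a, b)}) (A := {s(x, b)}) (by simpa using hab)
    (hA_of (by simpa using hxb)) (hr_of ?_) ?_ ha ?_
  · simp only [Finset.mem_singleton]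
    rintro e rfl
    refine ⟨a, b, rfl, ?_⟩
    refine Reachable.trans (mod_reach hT (w := x) ?_) (mod_adj (by simp) hxb.ne)
    simp only [Finset.mem_singleton]
    rintro e rfl
    exact ⟨a, b, rfl, hab, by simp [hs, side_self]⟩
  · intro v
    rw [cnt_single, cnt_single, ind_edge hxb.ne, ind_edge hab.ne]
    have := ind_leaf hx v
    omega
  · rw [cnt_single, cnt_single, ind_edge hxb.ne, ind_edge hab.ne, ind_self, ind_ne hxa]
    omega

/-- No edge has oblique leaves on both sides. -/
lemma no_opp {G T : SimpleGraph V} (hO : Opt G T) {a b x y : V} (hab : T.Adj a b)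
    (hx : T.degree x = 1) (hy : T.degree y = 1) (hxs : Side T a b x) (hys : Side T b a y)
    (hxb : G.Adj x b) (hya : G.Adj y a) : False := by
  have hT := opt_tree hO
  have hxa : x ≠ a := by rintro rfl; exact leaves_indep hO hy hx hya
  have hyb : y ≠ b := by rintro rfl; exact leaves_indep hO hx hy hxb
  have hxy : x ≠ y := by rintro rfl; exact side_not_both hT hab hxs hys
  have hab' := hab.ne
  refine kill_cyc hO (F := {s(a, b)}) (A := {s(x, b)}) (by simpa using hab)
    (hA_of (by simpa using hxb)) (hr_of ?_) hya ?_ ?_ ?_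
  · simp only [Finset.mem_singleton]
    rintro e rfl
    refine ⟨a, b, rfl, ?_⟩
    refine Reachable.trans (mod_reach hT (w := x) ?_) (mod_adj (by simp) hxb.ne)
    simp only [Finset.mem_singleton]
    rintro e rfl
    exact ⟨a, b, rfl, hab, by simp [hxs, side_self]⟩
  · intro h
    exact hyb (edge_across h hys (not_side hT hab.symm) hT hab.symm).1
  · simp only [Finset.mem_singleton]
    intro h
    rcases Sym2.eq_iff.1 h with ⟨h, _⟩ | ⟨h, _⟩
    · exact hxy h.symm
    · exact hyb h
  · intro v
    have h1 := cnt_insert_le {s(x, b)} s(y, a) v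
    rw [cnt_single, ind_edge hxb.ne, ind_edge hya.ne] at h1
    rw [cnt_single, ind_edge hab.ne]
    have := ind_leaf hx v
    have := ind_leaf hy v
    have := ind_disj hxy v
    omega

/-- Finding the first branch vertex behind an edge having two leaves on its near side. -/
lemma exists_branch_behind {T : SimpleGraph V} (hT : T.IsTree) {a b x y : V} (hab : T.Adj a b)
    (hx : T.degree x = 1) (hy : T.degree y = 1) (hxy : x ≠ y) (hxs : Side T a b x)
    (hys : Side T a b y) :
    ∃ p q, T.Adj p q ∧ 3 ≤ T.degree p ∧ Side T p q x ∧ Side T p q y ∧ Side T q p b := by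
  obtain ⟨⟨p, q⟩, hpq, hmin⟩ := Set.exists_min_image
    {d : V × V | T.Adj d.1 d.2 ∧ Side T d.1 d.2 x ∧ Side T d.1 d.2 y ∧ Side T d.2 d.1 b}
    (fun d => Set.ncard {v | Side T d.1 d.2 v}) (Set.toFinite _)
    ⟨(a, b), hab, hxs, hys, side_self _ _ _⟩
  obtain ⟨hadj, hpx, hpy, hqb⟩ := hpq
  simp only at hadj hpx hpy hqb
  refine ⟨p, q, hadj, ?_, hpx, hpy, hqb⟩
  by_contra hdeg
  have hpos : 0 < T.degree p := (degree_pos_iff_exists_adj _ _).2 ⟨q, hadj⟩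
  have h1 : T.degree p ≠ 1 := fun h =>
    hxy ((leaf_side hT h hadj hpx).trans (leaf_side hT h hadj hpy).symm)
  have h2 : T.degree p = 2 := by omega
  have hnx : p ≠ x := by rintro rfl; omega
  have hny : p ≠ y := by rintro rfl; omega
  obtain ⟨c, hc, hcx⟩ := exists_next hT hnx
  obtain ⟨d, hd, hdy⟩ := exists_next hT hny
  have hcq : c ≠ q := by rintro rfl; exact side_not_both hT hadj hpx hcx
  have hdq : d ≠ q := by rintro rfl; exact side_not_both hT hadj hpy hdy
  have hcd : c = d := by
    by_contra hcd
    have hsub : ({c, d, q} : Finset V) ⊆ T.neighborFinset p := by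
      intro z hz
      simp only [Finset.mem_insert, Finset.mem_singleton] at hz
      rw [mem_neighborFinset]
      rcases hz with rfl | rfl | rfl
      · exact hc.symm
      · exact hd.symm
      · exact hadj
    have := Finset.card_le_card hsub
    rw [card_neighborFinset_eq_degree, Finset.card_eq_three.2 ⟨c, d, q, hcd, hcq, hdq, rfl⟩] at this
    omega
  subst hcd
  have hb : Side T p c b := side_nested hT hadj.symm hc hcq.symm hqb
  have := hmin (c, p) ⟨hc, hcx, hdy, hb⟩
  simp only at this
  apply absurd this
  rw [not_le]
  apply Set.ncard_lt_ncard _ (Set.toFinite _)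
  refine ⟨fun v hv => side_nested hT hc hadj.symm hcq hv, fun h => ?_⟩
  exact not_side hT hc (h (side_self T p q))

/-- No two leaves are adjacent across the same edge from the same side. -/
lemma no_double {G T : SimpleGraph V} (hK : K14Free G) (hO : Opt G T) {a b x y : V}
    (hab : T.Adj a b)
    (hx : T.degree x = 1) (hy : T.degree y = 1) (hxy : x ≠ y) (hxs : Side T a b x)
    (hys : Side T a b y) (hxb : G.Adj x b) (hyb : G.Adj y b) : False := by
  have hT := opt_tree hO
  have hleaf : T.degree a ≠ 1 := fun h =>
    hxy ((leaf_side hT h hab hxs).trans (leaf_side hT h hab hys).symm)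
  have hxa : x ≠ a := by rintro rfl; exact hleaf hx
  have hya : y ≠ a := by rintro rfl; exact hleaf hy
  have hab' := hab.ne
  have hbl : T.degree b ≠ 1 := fun h => leaves_indep hO hx h hxb
  -- the further neighbour of `b`
  obtain ⟨c, hc, hca⟩ : ∃ c, T.Adj b c ∧ c ≠ a := by
    by_contra hno
    push Not at hno
    exact hbl (degree_eq_one_iff_existsUnique_adj.2 ⟨a, hab.symm, hno⟩)
  have hxbc : Side T b c x := side_nested hT hab hc.symm hca.symm hxs
  have hybc : Side T b c y := side_nested hT hab hc.symm hca.symm hys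
  have habc : Side T b c a := side_nested hT hab hc.symm hca.symm (side_self _ _ _)
  have hncb := not_side hT hc
  have hxyb : x ≠ b := hxb.ne
  have hyyb : y ≠ b := hyb.ne
  have hnxc : ∀ {x y : V}, T.degree x = 1 → T.degree y = 1 → x ≠ y → Side T b c x → Side T a b y →
      G.Adj y b → y ≠ a → x ≠ b → ¬ G.Adj x c := by
    intro x y hx hy hxy hxbc hys hyb hya hxyb hxc
    refine kill_cyc hO (F := {s(b, c)}) (A := {s(x, c)}) (by simpa using hc)
      (hA_of (by simpa using hxc)) (hr_of ?_) hyb ?_ ?_ ?_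
    · simp only [Finset.mem_singleton]
      rintro e rfl
      refine ⟨b, c, rfl, ?_⟩
      refine Reachable.trans (mod_reach hT (w := x) ?_) (mod_adj (by simp) hxc.ne)
      simp only [Finset.mem_singleton]
      rintro e rfl
      exact ⟨b, c, rfl, hc, by simp [hxbc, side_self]⟩
    · intro h
      exact hya (edge_across h hys (not_side hT hab) hT hab).1
    · simp only [Finset.mem_singleton]
      intro h
      rcases Sym2.eq_iff.1 h with ⟨h, _⟩ | ⟨_, h⟩
      · exact hxy h.symm
      · exact hxyb h.symm
    · intro v
      have h1 := cnt_insert_le {s(x, c)} s(y, b) v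
      rw [cnt_single, ind_edge hxc.ne, ind_edge hyb.ne] at h1
      rw [cnt_single, ind_edge hc.ne]
      have := ind_leaf hx v
      have := ind_leaf hy v
      have := ind_disj hxy v
      omega
  have hxc := hnxc hx hy hxy hxbc hys hyb hya hxyb
  have hyc := hnxc hy hx hxy.symm hybc hxs hxb hxa hyyb
  have hac : ¬ G.Adj a c := by
    intro hac
    have hne2 : s(a, b) ≠ s(b, c) := by
      intro h
      rcases Sym2.eq_iff.1 h with ⟨h, _⟩ | ⟨h, _⟩
      · exact hab' h
      · exact hca h.symm
    have hF : ∀ {A : Finset (Sym2 V)} {u w : V}, (Side T a b u ↔ Side T a b w) →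
        (Side T b c u ↔ Side T b c w) → (modG T {s(a, b), s(b, c)} A).Reachable u w := by
      intro A u w h1 h2
      apply mod_reach hT
      simp only [Finset.mem_insert, Finset.mem_singleton]
      rintro e (rfl | rfl)
      · exact ⟨a, b, rfl, hab, h1⟩
      · exact ⟨b, c, rfl, hc, h2⟩
    have hax : (modG T {s(a, b), s(b, c)} {s(a, c), s(x, b)}).Reachable a b := by
      refine Reachable.trans (hF (w := x) ?_ ?_) (mod_adj (by simp) hxb.ne)
      · simp [side_self, hxs]
      · simp [habc, hxbc]
    have hacr : (modG T {s(a, b), s(b, c)} {s(a, c), s(x, b)}).Reachable a c :=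
      mod_adj (by simp) hac.ne
    refine kill_cyc hO (F := {s(a, b), s(b, c)}) (A := {s(a, c), s(x, b)}) ?_
      (hA_of ?_) (hr_of ?_) hyb ?_ ?_ ?_
    · intro e he
      simp only [Finset.mem_insert, Finset.mem_singleton] at he
      rw [mem_edgeFinset]
      rcases he with rfl | rfl
      · exact hab
      · exact hc
    · simp only [Finset.mem_insert, Finset.mem_singleton]
      rintro e (rfl | rfl)
      · exact hac
      · exact hxb
    · simp only [Finset.mem_insert, Finset.mem_singleton]
      rintro e (rfl | rfl)
      · exact ⟨a, b, rfl, hax⟩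
      · exact ⟨b, c, rfl, hax.symm.trans hacr⟩
    · intro h
      exact hya (edge_across h hys (not_side hT hab) hT hab).1
    · simp only [Finset.mem_insert, Finset.mem_singleton]
      rintro (h | h)
      · rcases Sym2.eq_iff.1 h with ⟨h, _⟩ | ⟨_, h⟩
        · exact hya h
        · exact hab' h.symm
      · rcases Sym2.eq_iff.1 h with ⟨h, _⟩ | ⟨h, _⟩
        · exact hxy h.symm
        · exact hyyb h
    · intro v
      have h1 := cnt_insert_le {s(a, c), s(x, b)} s(y, b) v
      have h2 := cnt_insert_le {s(x, b)} s(a, c) v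
      rw [cnt_single, ind_edge hac.ne, ind_edge hxb.ne] at h2
      rw [ind_edge hyb.ne] at h1
      have h3 := cnt_insert_eq (A := {s(b, c)}) (e := s(a, b)) (by simpa using hne2) v
      rw [cnt_single, ind_edge hab.ne, ind_edge hc.ne] at h3
      have := ind_leaf hx v
      have := ind_leaf hy v
      have := ind_disj hxy v
      omega
  have hnxy := leaves_indep hO hx hy
  -- `K_{1,4}`-freeness
  have hor : G.Adj x a ∨ G.Adj y a := by
    by_contra hno
    push Not at hno
    refine hK ⟨b, x, y, a, c, hxy, hxa, ?_, hya, ?_, hca.symm, hxb.symm, hyb.symm,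
      hO.le hab.symm, hO.le hc, hnxy, hno.1, hxc, hno.2, hyc, hac⟩
    · rintro rfl; exact hncb hxbc
    · rintro rfl; exact hncb hybc
  have fin : ∀ {x y : V}, T.degree x = 1 → T.degree y = 1 → x ≠ y → Side T a b x → Side T a b y →
      G.Adj y b → ¬ G.Adj x a := by
    intro x y hx hy hxy hxs hys hyb hxa
    obtain ⟨p, q, hpq, hp3, hpx, hpy, hqb⟩ := exists_branch_behind hT hab hx hy hxy hxs hys
    have hpa : p ≠ a := by
      rintro rfl
      exact no_obl_branch hO hab hp3 hy hys hyb
    have hpb : p ≠ b := by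
      rintro rfl
      exact not_side hT hpq.symm hqb
    have hne2 : s(a, b) ≠ s(p, q) := by
      intro h
      rcases Sym2.eq_iff.1 h with ⟨h, _⟩ | ⟨_, h⟩
      · exact hpa h.symm
      · exact hpb h.symm
    have hqa : Side T q p a := (side_congr hab (by rwa [Sym2.eq_swap (a := q)])).2 hqb
    have hnpa : ¬ Side T p q a := (side_compl hT hpq a).1 hqa
    have hpqside : Side T a b p ↔ Side T a b q := side_congr hpq hne2.symm
    have hps : Side T a b p := by
      by_contra hps
      exact hnpa ((side_const hps hxs).2 hpx)
    have hqs := hpqside.1 hps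
    have hF : ∀ {A : Finset (Sym2 V)} {u w : V}, (Side T a b u ↔ Side T a b w) →
        (Side T p q u ↔ Side T p q w) → (modG T {s(a, b), s(p, q)} A).Reachable u w := by
      intro A u w h1 h2
      apply mod_reach hT
      simp only [Finset.mem_insert, Finset.mem_singleton]
      rintro e (rfl | rfl)
      · exact ⟨a, b, rfl, hab, h1⟩
      · exact ⟨p, q, rfl, hpq, h2⟩
    have hxar : (modG T {s(a, b), s(p, q)} {s(x, a), s(y, b)}).Reachable x a :=
      mod_adj (by simp) hxa.ne
    refine kill_deg hO (F := {s(a, b), s(p, q)}) (A := {s(x, a), s(y, b)}) ?_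
      (hA_of ?_) (hr_of ?_) ?_ hp3 ?_
    · intro e he
      simp only [Finset.mem_insert, Finset.mem_singleton] at he
      rw [mem_edgeFinset]
      rcases he with rfl | rfl
      · exact hab
      · exact hpq
    · simp only [Finset.mem_insert, Finset.mem_singleton]
      rintro e (rfl | rfl)
      · exact hxa
      · exact hyb
    · simp only [Finset.mem_insert, Finset.mem_singleton]
      rintro e (rfl | rfl)
      · refine ⟨a, b, rfl, hxar.symm.trans (Reachable.trans (hF (w := y) ?_ ?_)
          (mod_adj (by simp) hyb.ne))⟩
        · simp [hxs, hys]
        · simp [hpx, hpy]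
      · refine ⟨p, q, rfl, Reachable.trans (hF (w := x) ?_ ?_) (hxar.trans (hF ?_ ?_))⟩
        · simp [hxs, hps]
        · simp [hpx, side_self]
        · simp [side_self, hqs]
        · simp [hnpa, not_side hT hpq]
    · intro v
      have h1 := cnt_insert_le {s(y, b)} s(x, a) v
      rw [cnt_single, ind_edge hxa.ne, ind_edge hyb.ne] at h1
      have h3 := cnt_insert_eq (A := {s(p, q)}) (e := s(a, b)) (by simpa using hne2) v
      rw [cnt_single, ind_edge hab.ne, ind_edge hpq.ne] at h3
      have := ind_leaf hx v
      have := ind_leaf hy v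
      have := ind_disj hxy v
      omega
    · have h1 := cnt_insert_le {s(y, b)} s(x, a) p
      rw [cnt_single, ind_edge hxa.ne, ind_edge hyb.ne] at h1
      have h3 := cnt_insert_eq (A := {s(p, q)}) (e := s(a, b)) (by simpa using hne2) p
      rw [cnt_single, ind_edge hab.ne, ind_edge hpq.ne, ind_self p] at h3
      have := ind_ne hpa.symm
      have := ind_ne hpb.symm
      have := ind_leaf hx p
      have := ind_leaf hy p
      omega
  rcases hor with h | h
  · exact fin hx hy hxy hxs hys hyb h
  · exact fin hy hx hxy.symm hys hxs hxb h

end KB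

namespace KB

set_option linter.unusedSectionVars false

variable [Fintype V]

/-- Each leaf hangs off a branch vertex along a bare path. -/
lemma base_dart {T : SimpleGraph V} (hT : T.IsTree) (hpos : 0 < (branchSet T).card) {x : V}
    (hx : T.degree x = 1) :
    ∃ u p, T.Adj u p ∧ 3 ≤ T.degree p ∧ Side T u p x ∧
      ∀ w, Side T u p w → w = x ∨ T.degree w = 2 := by
  obtain ⟨y, hy⟩ := (degree_pos_iff_exists_adj T x).1 (by omega)
  obtain ⟨⟨u, v⟩, huv, hmax⟩ := Set.exists_max_image
    {d : V × V | T.Adj d.1 d.2 ∧ Side T d.1 d.2 x ∧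
      ∀ w, Side T d.1 d.2 w → w = x ∨ T.degree w = 2}
    (fun d => Set.ncard {v | Side T d.1 d.2 v}) (Set.toFinite _)
    ⟨(x, y), hy, side_self _ _ _, fun w hw => Or.inl (leaf_side hT hx hy hw)⟩
  obtain ⟨hadj, hs, hg⟩ := huv
  simp only at hadj hs hg
  refine ⟨u, v, hadj, ?_, hs, hg⟩
  by_contra hdeg
  by_cases h1 : T.degree v = 1
  · obtain ⟨z, hz⟩ := Finset.card_pos.1 hpos
    simp only [branchSet, Finset.mem_filter, Finset.mem_univ, true_and] at hz
    have hvz : v ≠ z := by rintro rfl; omega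
    obtain ⟨a, ha, has⟩ := exists_next hT hvz
    obtain rfl := leaf_unique h1 ha.symm hadj.symm
    rcases hg z has with rfl | h <;> omega
  · have hvpos : 0 < T.degree v := (degree_pos_iff_exists_adj _ _).2 ⟨u, hadj.symm⟩
    obtain ⟨c, hc, hcu⟩ : ∃ c, T.Adj v c ∧ c ≠ u := by
      by_contra hno
      push Not at hno
      exact h1 (degree_eq_one_iff_existsUnique_adj.2 ⟨u, hadj.symm, hno⟩)
    have hgood : ∀ w, Side T v c w → w = x ∨ T.degree w = 2 := by
      intro w hw
      by_cases hvw : v = w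
      · subst hvw; right; omega
      obtain ⟨a, ha, has⟩ := exists_next hT hvw
      have hac : a ≠ c := by rintro rfl; exact side_not_both hT hc hw has
      by_cases hau : a = u
      · subst hau; exact hg w has
      have hsub : ({a, c, u} : Finset V) ⊆ T.neighborFinset v := by
        intro z hz
        simp only [Finset.mem_insert, Finset.mem_singleton] at hz
        rw [mem_neighborFinset]
        rcases hz with rfl | rfl | rfl
        · exact ha.symm
        · exact hc
        · exact hadj.symm
      have := Finset.card_le_card hsub
      rw [card_neighborFinset_eq_degree,
        Finset.card_eq_three.2 ⟨a, c, u, hac, hau, hcu, rfl⟩] at this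
      omega
    have := hmax (v, c) ⟨hc, side_nested hT hadj hc.symm hcu.symm hs, hgood⟩
    simp only at this
    apply absurd this
    rw [not_le]
    apply Set.ncard_lt_ncard _ (Set.toFinite _)
    refine ⟨fun w hw => side_nested hT hadj hc.symm hcu.symm hw, fun h => ?_⟩
    exact not_side hT hadj (h (side_self T v c))

lemma fiber_bound {G T : SimpleGraph V} (hO : Opt G T) {p : V} (hp : 3 ≤ T.degree p)
    (Q : Finset V) (u c : V → V) (hleaf : ∀ x ∈ Q, T.degree x = 1)
    (hu : ∀ x ∈ Q, T.Adj (u x) p) (hs : ∀ x ∈ Q, Side T (u x) p x)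
    (hg : ∀ x ∈ Q, ∀ w, Side T (u x) p w → w = x ∨ T.degree w = 2)
    (hc : ∀ x ∈ Q, G.Adj x (c x)) (hc3 : ∀ x ∈ Q, 3 ≤ T.degree (c x))
    (hcp : ∀ x ∈ Q, c x ≠ p) : Q.card + 3 ≤ T.degree p := by
  have hT := opt_tree hO
  by_contra hlt
  obtain ⟨F, hFdef⟩ : ∃ F : Finset (Sym2 V), F = Q.image (fun x => s(u x, p)) := ⟨_, rfl⟩
  obtain ⟨A, hAdef⟩ : ∃ A : Finset (Sym2 V), A = Q.image (fun x => s(x, c x)) := ⟨_, rfl⟩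
  have hinj : ∀ x ∈ Q, ∀ y ∈ Q, u x = u y → x = y := by
    intro x hx y hy hxy
    have h1 := hs y hy
    rw [← hxy] at h1
    have h2 := hleaf y hy
    rcases hg x hx y h1 with h | h
    · exact h.symm
    · omega
  have hFs : F ⊆ T.edgeFinset := by
    intro e he
    rw [hFdef, Finset.mem_image] at he
    obtain ⟨x, hx, rfl⟩ := he
    rw [mem_edgeFinset]
    exact hu x hx
  have hcF : cnt F p = Q.card := by
    unfold cnt
    rw [Finset.filter_true_of_mem, hFdef, Finset.card_image_of_injOn]
    · intro x hx y hy hxy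
      simp only at hxy
      exact hinj x hx y hy (by
        rcases Sym2.eq_iff.1 hxy with ⟨h, _⟩ | ⟨h, h'⟩
        · exact h
        · exact h.trans h')
    · intro e he
      rw [hFdef, Finset.mem_image] at he
      obtain ⟨x, hx, rfl⟩ := he
      simp
  have hcAp : cnt A p = 0 := by
    unfold cnt
    rw [Finset.card_eq_zero, Finset.filter_eq_empty_iff]
    intro e he hpe
    rw [hAdef, Finset.mem_image] at he
    obtain ⟨x, hx, rfl⟩ := he
    rcases Sym2.mem_iff.1 hpe with h | h
    · have := hleaf x hx
      rw [← h] at this; omega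
    · exact hcp x hx h.symm
  have hcA : ∀ v, T.degree v ≤ 2 → cnt A v = 0 ∨ (T.degree v = 1 ∧ cnt A v ≤ 1) := by
    intro v hv
    have hmem : ∀ e ∈ A.filter (fun e => v ∈ e), v ∈ Q ∧ e = s(v, c v) := by
      intro e he
      rw [Finset.mem_filter] at he
      obtain ⟨he, hve⟩ := he
      rw [hAdef, Finset.mem_image] at he
      obtain ⟨x, hx, rfl⟩ := he
      rcases Sym2.mem_iff.1 hve with h | h
      · subst h; exact ⟨hx, rfl⟩
      · have := hc3 x hx
        rw [← h] at this; omega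
    by_cases hvQ : v ∈ Q
    · right
      refine ⟨hleaf v hvQ, ?_⟩
      unfold cnt
      rw [Finset.card_le_one]
      intro a ha b hb
      exact (hmem a ha).2.trans (hmem b hb).2.symm
    · left
      unfold cnt
      rw [Finset.card_eq_zero, Finset.eq_empty_iff_forall_notMem]
      exact fun e he => hvQ (hmem e he).1
  have hconn : (modG T F A).Connected := by
    apply conn_mod hO.conn
    apply hr_of
    intro e he
    rw [hFdef, Finset.mem_image] at he
    obtain ⟨x, hx, rfl⟩ := he
    refine ⟨u x, p, rfl, ?_⟩
    have hA1 : s(x, c x) ∈ A := by rw [hAdef]; exact Finset.mem_image_of_mem _ hx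
    refine (mod_reach hT (w := x) ?_).trans ((mod_adj hA1 (hc x hx).ne).trans (mod_reach hT ?_))
    · intro e he
      rw [hFdef, Finset.mem_image] at he
      obtain ⟨z, hz, rfl⟩ := he
      refine ⟨u z, p, rfl, hu z hz, ?_, ?_⟩
      · intro h
        have := side_unique hT (hu z hz) (hu x hx) h (side_self _ _ _)
        rw [this]; exact hs x hx
      · intro h
        have := side_unique hT (hu z hz) (hu x hx) h (hs x hx)
        rw [this]; exact side_self _ _ _
    · intro e he
      rw [hFdef, Finset.mem_image] at he
      obtain ⟨z, hz, rfl⟩ := he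
      refine ⟨u z, p, rfl, hu z hz, ?_, ?_⟩
      · intro h
        exfalso
        have h1 := hc3 x hx
        have h2 := hleaf z hz
        rcases hg z hz _ h with h | h
        · rw [h] at h1; omega
        · omega
      · intro h
        exact absurd h (not_side hT (hu z hz))
  have hle : modG T F A ≤ G := by
    apply mod_le hO.le
    apply hA_of
    intro e he
    rw [hAdef, Finset.mem_image] at he
    obtain ⟨x, hx, rfl⟩ := he
    exact hc x hx
  have hsub : branchSet (modG T F A) ⊆ (branchSet T).erase p := by
    intro v hv
    simp only [branchSet, Finset.mem_filter, Finset.mem_univ, true_and, Finset.mem_erase] at *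
    have h1 := degree_mod hFs A v
    constructor
    · rintro rfl
      omega
    · by_contra h3
      have := hcA v (by omega)
      omega
  have hpB : p ∈ branchSet T := by simpa [branchSet] using hp
  have h1 := Finset.card_le_card hsub
  rw [Finset.card_erase_of_mem hpB] at h1
  have h2 := hO.min _ hle hconn
  have h3 := hO.pos
  omega

lemma leaf_count {T : SimpleGraph V} (hT : T.IsTree) (hpos : 0 < (branchSet T).card) :
    (leafSet T).card = 2 + ∑ v ∈ branchSet T, (T.degree v - 2) := by
  have h1 := T.sum_degrees_eq_twice_card_edges
  have h2 := hT.card_edgeFinset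
  have hd : ∀ v, 1 ≤ T.degree v := by
    intro v
    by_contra hv
    obtain ⟨z, hz⟩ := Finset.card_pos.1 hpos
    simp only [branchSet, Finset.mem_filter, Finset.mem_univ, true_and] at hz
    have hvz : v ≠ z := by rintro rfl; omega
    obtain ⟨a, ha, _⟩ := exists_next hT hvz
    have := (degree_pos_iff_exists_adj T v).2 ⟨a, ha.symm⟩
    omega
  have h3 : ∑ v, (T.degree v + if T.degree v = 1 then 1 else 0) =
      ∑ v, (2 + if 3 ≤ T.degree v then T.degree v - 2 else 0) := by
    apply Finset.sum_congr rfl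
    intro v _
    have := hd v
    split_ifs <;> omega
  rw [Finset.sum_add_distrib, Finset.sum_add_distrib, ← Finset.sum_filter, ← Finset.sum_filter,
    h1, Finset.sum_const, Finset.sum_const] at h3
  simp only [Finset.card_univ, smul_eq_mul, mul_one] at h3
  unfold leafSet branchSet
  omega

lemma edge_count {G T : SimpleGraph V} (hK : K14Free G) (hO : Opt G T) (S : Finset V)
    (hS : ∀ x ∈ S, T.degree x = 1)
    (hB : ∀ x ∈ S, ∀ c, 3 ≤ T.degree c → G.Adj x c → ∃ u, T.Adj u c ∧ Side T u c x ∧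
      ∀ w, Side T u c w → w = x ∨ T.degree w = 2) :
    ∑ x ∈ S, G.degree x + (branchSet T).card ≤ Fintype.card V := by
  have hT := opt_tree hO
  obtain ⟨r, hr⟩ := Finset.card_pos.1 hO.pos
  have hr3 : 3 ≤ T.degree r := by simpa [branchSet] using hr
  obtain ⟨E1, hE1⟩ : ∃ E1 : Finset (Sym2 V), E1 =
    (S.sigma (fun x => G.neighborFinset x)).image (fun d => s(d.2, nxt T d.2 d.1)) := ⟨_, rfl⟩
  obtain ⟨E2, hE2⟩ : ∃ E2 : Finset (Sym2 V), E2 =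
    ((branchSet T).erase r).image (fun c => s(c, nxt T c r)) := ⟨_, rfl⟩
  have hc1 : E1.card = ∑ x ∈ S, G.degree x := by
    rw [hE1, Finset.card_image_of_injOn, Finset.card_sigma]
    · rfl
    · rintro ⟨x, v⟩ hx ⟨y, w⟩ hy hxy
      simp only [Finset.coe_sigma, Set.mem_sigma_iff, Finset.mem_coe, mem_neighborFinset] at hx hy
      simp only at hxy
      obtain ⟨hx, hxv⟩ := hx
      obtain ⟨hy, hyw⟩ := hy
      obtain ⟨a1, s1⟩ := nxt_spec hT hxv.ne.symm
      obtain ⟨a2, s2⟩ := nxt_spec hT hyw.ne.symm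
      rcases Sym2.eq_iff.1 hxy with ⟨h, h'⟩ | ⟨h, h'⟩
      · subst h
        by_cases hne : x = y
        · subst hne; rfl
        · rw [← h'] at s2
          exact (no_double hK hO a1 (hS x hx) (hS y hy) hne s1 s2 hxv hyw).elim
      · rw [h'] at a1 s1
        rw [← h] at s2
        exact (no_opp hO a1 (hS x hx) (hS y hy) s1 s2 hxv hyw).elim
  have hc2 : E2.card + 1 = (branchSet T).card := by
    rw [hE2, Finset.card_image_of_injOn, Finset.card_erase_add_one hr]
    intro c hc d hd hcd
    simp only [Finset.coe_erase, Set.mem_sdiff, Set.mem_singleton_iff] at hc hd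
    simp only at hcd
    obtain ⟨a1, s1⟩ := nxt_spec hT hc.2
    obtain ⟨a2, s2⟩ := nxt_spec hT hd.2
    rcases Sym2.eq_iff.1 hcd with ⟨h, _⟩ | ⟨h, h'⟩
    · exact h
    · rw [h'] at a1 s1
      rw [← h] at s2
      exact (side_not_both hT a1 s1 s2).elim
  have hdis : Disjoint E1 E2 := by
    rw [Finset.disjoint_left]
    intro e h1 h2
    rw [hE1, Finset.mem_image] at h1
    rw [hE2, Finset.mem_image] at h2
    obtain ⟨⟨x, v⟩, hx, rfl⟩ := h1
    obtain ⟨c, hc, hcx⟩ := h2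
    simp only [Finset.mem_sigma, mem_neighborFinset] at hx
    simp only [Finset.mem_erase, branchSet, Finset.mem_filter, Finset.mem_univ, true_and] at hc
    simp only at hcx
    obtain ⟨hx, hxv⟩ := hx
    obtain ⟨a1, s1⟩ := nxt_spec hT hxv.ne.symm
    obtain ⟨a2, s2⟩ := nxt_spec hT hc.1
    rcases Sym2.eq_iff.1 hcx with ⟨h, h'⟩ | ⟨h, h'⟩
    · subst h
      obtain ⟨u, hu, hus, hug⟩ := hB x hx c hc.2 hxv
      have := side_unique hT hu a1 hus s1
      rw [h', ← this] at s2
      have := hS x hx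
      rcases hug r s2 with h | h
      · rw [← h] at this; omega
      · omega
    · rw [← h] at a1 s1
      exact no_obl_branch hO a1 hc.2 (hS x hx) s1 hxv
  have hsub : E1 ∪ E2 ⊆ T.edgeFinset := by
    intro e he
    rw [mem_edgeFinset]
    rcases Finset.mem_union.1 he with h1 | h2
    · rw [hE1, Finset.mem_image] at h1
      obtain ⟨⟨x, v⟩, hx, rfl⟩ := h1
      simp only [Finset.mem_sigma, mem_neighborFinset] at hx
      exact (nxt_spec hT hx.2.ne.symm).1.symm
    · rw [hE2, Finset.mem_image] at h2
      obtain ⟨c, hc, rfl⟩ := h2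
      rw [Finset.mem_erase] at hc
      exact (nxt_spec hT hc.1).1.symm
  have h1 := Finset.card_le_card hsub
  rw [Finset.card_union_of_disjoint hdis] at h1
  have h2 := hT.card_edgeFinset
  omega

lemma final {G T : SimpleGraph V} (hK : K14Free G) (hO : Opt G T) :
    ∃ L : Finset V, (branchSet T).card + 2 ≤ L.card ∧ IsIndepFinset G L ∧
      ∀ S ⊆ L, ∑ x ∈ S, G.degree x + (branchSet T).card ≤ Fintype.card V := by
  have hT := opt_tree hO
  have hbd : ∀ x, ∃ d : V × V, T.degree x = 1 → (T.Adj d.1 d.2 ∧ 3 ≤ T.degree d.2 ∧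
      Side T d.1 d.2 x ∧ ∀ w, Side T d.1 d.2 w → w = x ∨ T.degree w = 2) := by
    intro x
    by_cases hx : T.degree x = 1
    · obtain ⟨u, p, h⟩ := base_dart hT hO.pos hx
      exact ⟨(u, p), fun _ => h⟩
    · exact ⟨(x, x), fun h => absurd h hx⟩
  choose d hd using hbd
  obtain ⟨X, hX⟩ : ∃ X : Finset V, X = (leafSet T).filter
    (fun x => ∃ c, 3 ≤ T.degree c ∧ c ≠ (d x).2 ∧ G.Adj x c) := ⟨_, rfl⟩
  have hXl : ∀ x ∈ X, T.degree x = 1 := by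
    intro x hx
    rw [hX, Finset.mem_filter] at hx
    simpa [leafSet] using hx.1
  have hXc : ∀ x, ∃ c, x ∈ X → 3 ≤ T.degree c ∧ c ≠ (d x).2 ∧ G.Adj x c := by
    intro x
    by_cases hx : x ∈ X
    · have hx' := hx
      rw [hX, Finset.mem_filter] at hx'
      obtain ⟨c, hc⟩ := hx'.2
      exact ⟨c, fun _ => hc⟩
    · exact ⟨x, fun h => absurd h hx⟩
  choose c hc using hXc
  have hfib : ∀ p ∈ branchSet T, (X.filter (fun x => (d x).2 = p)).card ≤ T.degree p - 3 := by
    intro p hp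
    have hp3 : 3 ≤ T.degree p := by simpa [branchSet] using hp
    have hQ : ∀ x ∈ X.filter (fun x => (d x).2 = p), x ∈ X ∧ (d x).2 = p :=
      fun x hx => Finset.mem_filter.1 hx
    have := fiber_bound hO hp3 (X.filter (fun x => (d x).2 = p)) (fun x => (d x).1) c
      (fun x hx => hXl x (hQ x hx).1)
      (fun x hx => by
        have := (hd x (hXl x (hQ x hx).1)).1; rwa [(hQ x hx).2] at this)
      (fun x hx => by
        have := (hd x (hXl x (hQ x hx).1)).2.2.1; rwa [(hQ x hx).2] at this)
      (fun x hx => by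
        have := (hd x (hXl x (hQ x hx).1)).2.2.2; rwa [(hQ x hx).2] at this)
      (fun x hx => (hc x (hQ x hx).1).2.2) (fun x hx => (hc x (hQ x hx).1).1)
      (fun x hx => by
        have := (hc x (hQ x hx).1).2.1; rwa [(hQ x hx).2] at this)
    omega
  have hXcard : X.card ≤ ∑ p ∈ branchSet T, (T.degree p - 3) := by
    rw [Finset.card_eq_sum_card_fiberwise (f := fun x => (d x).2) (t := branchSet T)]
    · exact Finset.sum_le_sum hfib
    · intro x hx
      have := (hd x (hXl x hx)).2.1
      simpa [branchSet] using this
  have hsum : ∑ p ∈ branchSet T, (T.degree p - 2) =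
      ∑ p ∈ branchSet T, (T.degree p - 3) + (branchSet T).card := by
    rw [Finset.card_eq_sum_ones, ← Finset.sum_add_distrib]
    apply Finset.sum_congr rfl
    intro p hp
    have hp3 : 3 ≤ T.degree p := by simpa [branchSet] using hp
    omega
  have hL := leaf_count hT hO.pos
  have hXsub : X ⊆ leafSet T := by rw [hX]; exact Finset.filter_subset _ _
  have hmem : ∀ x ∈ leafSet T \ X, T.degree x = 1 := by
    intro x hx
    simpa [leafSet] using (Finset.mem_sdiff.1 hx).1
  refine ⟨leafSet T \ X, ?_, ?_, ?_⟩
  · rw [Finset.card_sdiff_of_subset hXsub]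
    omega
  · intro x hx y hy _
    exact leaves_indep hO (hmem x hx) (hmem y hy)
  · intro S hS
    refine edge_count hK hO S (fun x hx => hmem x (hS hx)) ?_
    intro x hx v hv hxv
    have h1 := hd x (hmem x (hS hx))
    have h2 := Finset.mem_sdiff.1 (hS hx)
    have h3 : v = (d x).2 := by
      by_contra hne
      apply h2.2
      rw [hX, Finset.mem_filter]
      exact ⟨h2.1, v, hv, hne, hxv⟩
    refine ⟨(d x).1, ?_⟩
    rw [h3]
    exact ⟨h1.1, h1.2.2⟩

end KB

/-- If `k ≥ 1` and `G` is a connected `K_{1,4}`-free graph of order `n` with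
`σ_{k+3}(G) ≥ n - k`, then `G` has a spanning tree with at most `k` branch vertices. -/
theorem stmt3 {V : Type*} [Fintype V] (k : ℕ) (hk : 1 ≤ k)
    (G : SimpleGraph V) (hG : G.Connected) (hK : K14Free G)
    (hσ : ∀ s : Finset V, IsIndepFinset G s → s.card = k + 3 →
      Fintype.card V - k ≤ ∑ v ∈ s, G.degree v) :
    ∃ T : SimpleGraph V, T ≤ G ∧ T.IsTree ∧ (branchSet T).card ≤ k := by
  by_contra hno
  push Not at hno
  obtain ⟨T, hTG, hTc, hmin⟩ := KB.exists_min G hG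
  have hb : k < (branchSet T).card := by
    obtain ⟨T', hle, hT'⟩ := hTc.exists_isTree_le
    refine lt_of_lt_of_le (hno T' (hle.trans hTG) hT') (Finset.card_le_card ?_)
    exact KB.branch_mono (fun v _ => degree_le_of_le hle)
  have hO : KB.Opt G T := ⟨hTG, hTc, by omega, hmin⟩
  obtain ⟨L, hL, hind, hsum⟩ := KB.final hK hO
  obtain ⟨S, hSL, hS⟩ := Finset.exists_subset_card_eq (n := k + 3) (s := L) (by omega)
  have h1 := hσ S (fun u hu v hv => hind u (hSL hu) v (hSL hv)) hS
  have h2 := hsum S hSL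
  have h3 := Finset.card_le_univ S
  omega
end

section
/- Let G be a connected K_{1,4}-free simple graph of order n. If every independent set of 3 vertices in G has degree sum at least n, then G has a Hamiltonian path. -/
open SimpleGraph Finset List

open scoped Classical

variable {V : Type*}

/-- A spider with three legs `A`, `B`, `C` at `b`, with leaves `u`, `v`, `w`. -/
structure Spider (G : SimpleGraph V) (b u v w : V) (A B C : List V) : Prop where
  chA : List.IsChain G.Adj (b :: A)
  chB : List.IsChain G.Adj (b :: B)
  chC : List.IsChain G.Adj (b :: C)
  lA : A.getLast? = some u
  lB : B.getLast? = some v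
  lC : C.getLast? = some w
  nd : (b :: (A ++ B ++ C)).Nodup
  mx : ∀ l : List V, l.IsChain G.Adj → l.Perm (b :: (A ++ B ++ C)) → False

theorem chain_rev (G : SimpleGraph V) (l : List V) :
    l.reverse.IsChain G.Adj ↔ l.IsChain G.Adj := by
  rw [List.isChain_reverse]
  constructor <;> intro h <;> exact h.imp (fun a b h => G.adj_symm h)

namespace Spider

variable {G : SimpleGraph V} {b u v w : V} {A B C : List V}

theorem swap12 (h : Spider G b u v w A B C) : Spider G b v u w B A C := by
  have hp : (b :: (B ++ A ++ C)).Perm (b :: (A ++ B ++ C)) := by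
    apply List.Perm.cons
    exact List.Perm.append_right _ List.perm_append_comm
  exact ⟨h.chB, h.chA, h.chC, h.lB, h.lA, h.lC, hp.nodup_iff.2 h.nd,
    fun l hl hl' => h.mx l hl (hl'.trans hp)⟩

theorem swap23 (h : Spider G b u v w A B C) : Spider G b u w v A C B := by
  have hp : (b :: (A ++ C ++ B)).Perm (b :: (A ++ B ++ C)) := by
    apply List.Perm.cons
    rw [List.append_assoc, List.append_assoc]
    exact List.Perm.append_left _ List.perm_append_comm
  exact ⟨h.chA, h.chC, h.chB, h.lA, h.lC, h.lB, hp.nodup_iff.2 h.nd,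
    fun l hl hl' => h.mx l hl (hl'.trans hp)⟩

theorem leaf_indep (h : Spider G b u v w A B C) : ¬ G.Adj u v := by
  intro huv
  obtain ⟨chA, chB, chC, lA, lB, lC, nd, mx⟩ := h
  apply mx (C.reverse ++ b :: A ++ B.reverse)
  · simp only [List.isChain_append, List.isChain_cons, chain_rev] at *
    simp_all [G.adj_comm, List.getLast?_cons]
  · simp only [List.perm_iff_count]; intro a
    simp [List.count_cons]; omega

theorem not_adj_first {x : V} {Y : List V} (h : Spider G b u v w (x :: Y) B C) :
    ¬ G.Adj v x := by
  intro hvx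
  obtain ⟨chA, chB, chC, lA, lB, lC, nd, mx⟩ := h
  apply mx ((x :: Y).reverse ++ B.reverse ++ b :: C)
  · simp only [List.isChain_append, List.isChain_cons, chain_rev] at *
    simp_all [G.adj_comm, List.getLast?_cons]
    cases B <;> simp_all
  · simp only [List.perm_iff_count]; intro a
    simp [List.count_cons]; omega

theorem cross {X Y : List V} {p x : V} (h : Spider G b u v w (X ++ p :: x :: Y) B C)
    (hvx : G.Adj v x) : ¬ G.Adj w p := by
  intro hwp
  obtain ⟨chA, chB, chC, lA, lB, lC, nd, mx⟩ := h
  apply mx ((x :: Y).reverse ++ B.reverse ++ b :: X ++ [p] ++ C.reverse)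
  · simp only [List.isChain_append, List.isChain_cons, chain_rev] at *
    cases X <;> simp_all [G.adj_comm, List.getLast?_cons] <;> cases B <;> simp_all
  · simp only [List.perm_iff_count]; intro a
    simp [List.count_cons]; omega

theorem cross_self {X Y : List V} {p x : V} (h : Spider G b u v w (X ++ p :: x :: Y) B C)
    (hvx : G.Adj v x) : ¬ G.Adj u p := by
  intro hup
  obtain ⟨chA, chB, chC, lA, lB, lC, nd, mx⟩ := h
  apply mx (B ++ (x :: Y) ++ (X ++ [p]).reverse ++ b :: C)
  · simp only [List.isChain_append, List.isChain_cons, chain_rev] at *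
    cases X <;> simp_all [G.adj_comm, List.getLast?_cons]
  · simp only [List.perm_iff_count]; intro a
    simp [List.count_cons]; omega

theorem bypass {X Y : List V} {p x y : V} (h : Spider G b u v w (X ++ p :: x :: y :: Y) B C)
    (hvx : G.Adj v x) (hwx : G.Adj w x) : ¬ G.Adj p y := by
  intro hpy
  obtain ⟨chA, chB, chC, lA, lB, lC, nd, mx⟩ := h
  apply mx ((X ++ p :: y :: Y).reverse ++ [b] ++ B ++ [x] ++ C.reverse)
  · simp only [List.isChain_append, List.isChain_cons, chain_rev] at *
    cases X <;> simp_all [G.adj_comm, List.getLast?_cons]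
  · simp only [List.perm_iff_count]; intro a
    simp [List.count_cons]; omega

theorem not_both (hK : K14Free G) {X Y : List V} {p x : V}
    (h : Spider G b u v w (X ++ p :: x :: Y) B C)
    (hvx : G.Adj v x) : ¬ G.Adj w x := by
  intro hwx
  cases Y with
  | nil =>
    have hl := h.lA
    simp at hl
    subst hl
    exact h.leaf_indep hvx.symm
  | cons y Y =>
    have h2 : Spider G b u v w ((X ++ [p]) ++ x :: y :: Y) B C := by simpa using h
    have chA := h.chA
    have hv : v ∈ B := List.mem_of_getLast? h.lB
    have hw : w ∈ C := List.mem_of_getLast? h.lC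
    have nd := h.nd
    simp only [List.isChain_append, List.isChain_cons] at chA
    have hvp := h.swap23.cross hwx
    have hwp := h.cross hvx
    have hvy : ¬ G.Adj v y := fun hh => h2.cross hh hwx
    have hwy : ¬ G.Adj w y := fun hh => h2.swap23.cross hh hvx
    have hpy := h.bypass hvx hwx
    have hvw : ¬ G.Adj v w := h.swap12.swap23.leaf_indep
    simp [List.nodup_append] at nd
    refine hK ⟨x, v, w, p, y, ?_, ?_, ?_, ?_, ?_, ?_, hvx.symm, hwx.symm, ?_, ?_, hvw, hvp, hvy,
      hwp, hwy, hpy⟩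
    · grind
    · grind
    · grind
    · grind
    · grind
    · grind
    · simp at chA; exact chA.2.2.1.1.symm
    · simp at chA; exact chA.2.2.1.2.1

end Spider

theorem count_leg (f g : V → ℕ) (A : List V) : ∀ (p : V),
    List.IsChain (fun p x => f p + g x ≤ 1) (p :: A) →
    (∀ z ∈ (p :: A).getLast?, f z = 0) →
    f p + (A.map f).sum + (A.map g).sum ≤ A.length := by
  induction A with
  | nil => intro p _ h; simp at h; simp [h]
  | cons x A ih =>
    intro p h hl
    rw [List.isChain_cons_cons] at h
    have := ih x h.2 (by simpa using hl)
    simp only [List.map_cons, List.sum_cons, List.length_cons]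
    have := h.1
    omega

theorem Spider.leg {G : SimpleGraph V} {b u v w : V} {A B C : List V} (hK : K14Free G)
    (h : Spider G b u v w A B C) (f : V → V → ℕ) (hf : ∀ x y, f x y = if G.Adj x y then 1 else 0) :
    f u b + (A.map (f u)).sum + (A.map (fun x => f v x + f w x)).sum ≤ A.length := by
  apply count_leg
  · rw [List.isChain_iff_forall_rel_of_append_cons_cons]
    intro p x X Y hh
    simp only [hf]
    cases X with
    | nil =>
      simp at hh
      obtain ⟨rfl, rfl⟩ := hh
      have h1 := h.not_adj_first
      have h2 := h.swap23.not_adj_first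
      rw [if_neg h1, if_neg h2]
      split_ifs <;> simp
    | cons q X =>
      simp at hh
      obtain ⟨rfl, rfl⟩ := hh
      have h1 := h.cross_self
      have h2 := h.swap23.cross_self
      have h3 := h.not_both hK
      split_ifs <;> simp_all
  · have := h.lA
    intro z hz
    cases A with
    | nil => simp at this
    | cons a A =>
      rw [List.getLast?_cons_cons, this] at hz
      simp at hz
      subst hz
      simp [hf]

/-- A list path through all the vertices gives a Hamiltonian walk. -/
theorem walk_of_list (G : SimpleGraph V) (l : List V) : ∀ a, (a :: l).IsChain G.Adj →
    ∃ (z : V) (p : G.Walk a z), p.support = a :: l := by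
  induction l with
  | nil => intro a _; exact ⟨a, Walk.nil, rfl⟩
  | cons x l ih =>
    intro a h
    rw [List.isChain_cons_cons] at h
    obtain ⟨z, p, hp⟩ := ih x h.2
    exact ⟨z, Walk.cons h.1 p, by simp [hp]⟩

/-- From a longest path, a spider with one more vertex. -/
theorem exists_bigger [Fintype V] (G : SimpleGraph V) (hG : G.Connected)
    (hH : ¬ ∃ (u v : V) (p : G.Walk u v), p.IsHamiltonian)
    (l : List V) (hl : l.IsChain G.Adj) (nd : l.Nodup)
    (mx : ∀ l' : List V, l'.IsChain G.Adj → l'.Nodup → l'.length ≤ l.length) :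
    ∃ b A B C, A ≠ [] ∧ B ≠ [] ∧ C ≠ [] ∧ (b :: A).IsChain G.Adj ∧ (b :: B).IsChain G.Adj ∧
      (b :: C).IsChain G.Adj ∧ (b :: (A ++ B ++ C)).Nodup ∧
      l.length < (b :: (A ++ B ++ C)).length := by
  obtain ⟨v0⟩ := hG.nonempty
  have hne : l ≠ [] := by
    rintro rfl
    have := mx [v0] (by simp) (by simp)
    simp at this
  obtain ⟨a, l0, rfl⟩ := List.exists_cons_of_ne_nil hne
  have hz : ∃ z, z ∉ a :: l0 := by
    by_contra hc
    push Not at hc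
    obtain ⟨z, p, hp⟩ := walk_of_list G l0 a hl
    exact hH ⟨a, z, p, fun c => by rw [hp]; exact List.count_eq_one_of_mem nd (hc c)⟩
  obtain ⟨z0, hz0⟩ := hz
  obtain ⟨q⟩ := hG.preconnected a z0
  obtain ⟨d, -, hd1, hd2⟩ := q.exists_boundary_dart {x | x ∈ a :: l0} (by simp) hz0
  have hadj := d.adj
  generalize d.fst = x at *
  generalize d.snd = z at *
  simp only [Set.mem_ofPred_eq] at hd1 hd2
  generalize a :: l0 = l at *
  obtain ⟨X, Y, rfl⟩ := List.append_of_mem hd1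
  refine ⟨x, X.reverse, Y, [z], ?_, ?_, by simp, ?_, ?_, ?_, ?_, ?_⟩
  · intro hX
    simp at hX
    subst hX
    have := mx (z :: x :: Y) (by simp_all [G.adj_comm]) (by simp_all)
    simp at this
  · rintro rfl
    have := mx (X ++ [x] ++ [z]) (by rw [List.isChain_append]; simp_all)
      (by rw [List.nodup_append]; simp_all; grind)
    simp at this
  · rw [← chain_rev]
    simp only [List.reverse_cons, List.reverse_reverse]
    simp only [List.isChain_append, List.isChain_cons] at *
    simp_all
  · exact (List.isChain_append.1 hl).2.1
  · simpa using hadj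
  · have hp : (x :: (X.reverse ++ Y ++ [z])).Perm (z :: (X ++ x :: Y)) := by
      simp only [List.perm_iff_count]; intro a
      simp [List.count_cons]; omega
    rw [hp.nodup_iff]
    simp_all
  · simp

theorem exists_max_of_bdd (P : ℕ → Prop) (N : ℕ) (hN : ∀ n, P n → n ≤ N) (h : ∃ n, P n) :
    ∃ n, P n ∧ ∀ m, P m → m ≤ n := by
  obtain ⟨k, hk⟩ := h
  exact ⟨Nat.findGreatest P N, Nat.findGreatest_spec (hN k hk) hk,
    fun m hm => Nat.le_findGreatest (hN m hm) hm⟩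

set_option maxHeartbeats 2000000 in
/-- If `G` is a connected `K_{1,4}`-free graph of order `n` with `σ_3(G) ≥ n`,
then `G` has a Hamiltonian path. -/
theorem stmt4 {V : Type*} [Fintype V]
    (G : SimpleGraph V) (hG : G.Connected) (hK : K14Free G)
    (hσ : ∀ s : Finset V, IsIndepFinset G s → s.card = 3 →
      Fintype.card V ≤ ∑ v ∈ s, G.degree v) :
    ∃ (u v : V) (p : G.Walk u v), p.IsHamiltonian := by
  by_contra hH
  have nodup_le : ∀ l : List V, l.Nodup → l.length ≤ Fintype.card V :=
    fun l hl => hl.length_le_card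
  obtain ⟨m, ⟨l, hl, nd, rfl⟩, mx⟩ := exists_max_of_bdd
    (fun n => ∃ l : List V, l.IsChain G.Adj ∧ l.Nodup ∧ l.length = n) (Fintype.card V)
    (by rintro n ⟨l, -, h, rfl⟩; exact nodup_le l h) ⟨0, [], by simp, by simp, rfl⟩
  have mx' : ∀ l' : List V, l'.IsChain G.Adj → l'.Nodup → l'.length ≤ l.length :=
    fun l' h1 h2 => mx _ ⟨l', h1, h2, rfl⟩
  obtain ⟨b0, A0, B0, C0, hs0⟩ := exists_bigger G hG hH l hl nd mx'
  obtain ⟨m, ⟨b, A, B, C, hA, hB, hC, cA, cB, cC, nd', hlt, rfl⟩, mxs⟩ := exists_max_of_bdd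
    (fun n => ∃ b A B C, A ≠ [] ∧ B ≠ [] ∧ C ≠ [] ∧ (b :: A).IsChain G.Adj ∧
      (b :: B).IsChain G.Adj ∧ (b :: C).IsChain G.Adj ∧ (b :: (A ++ B ++ C)).Nodup ∧
      l.length < (b :: (A ++ B ++ C)).length ∧ (b :: (A ++ B ++ C)).length = n) (Fintype.card V)
    (by rintro n ⟨b, A, B, C, -, -, -, -, -, -, h, -, rfl⟩; exact nodup_le _ h)
    ⟨_, b0, A0, B0, C0, hs0.1, hs0.2.1, hs0.2.2.1, hs0.2.2.2.1, hs0.2.2.2.2.1, hs0.2.2.2.2.2.1,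
      hs0.2.2.2.2.2.2.1, hs0.2.2.2.2.2.2.2, rfl⟩
  obtain ⟨A', u, rfl⟩ := List.eq_nil_or_concat' A |>.resolve_left hA
  obtain ⟨B', v, rfl⟩ := List.eq_nil_or_concat' B |>.resolve_left hB
  obtain ⟨C', w, rfl⟩ := List.eq_nil_or_concat' C |>.resolve_left hC
  have hS : Spider G b u v w (A' ++ [u]) (B' ++ [v]) (C' ++ [w]) := by
    refine ⟨cA, cB, cC, by simp, by simp, by simp, nd', ?_⟩
    intro l' hl' hp
    have h1 := mx' l' hl' (hp.nodup_iff.2 nd')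
    have h2 := hp.length_eq
    omega
  have cons_ch : ∀ (D : List V) (t z : V), (b :: (D ++ [t])).IsChain G.Adj → G.Adj t z →
      (b :: (D ++ [t] ++ [z])).IsChain G.Adj := by
    intro D t z h1 h2
    rw [← List.cons_append, List.isChain_append]
    refine ⟨h1, by simp, ?_⟩
    rw [← List.cons_append, List.getLast?_concat]
    simpa using h2
  have hu : ∀ z, G.Adj u z → z ∈ b :: ((A' ++ [u]) ++ (B' ++ [v]) ++ (C' ++ [w])) := by
    intro z hz
    by_contra hzn
    have := mxs _ ⟨b, A' ++ [u] ++ [z], B' ++ [v], C' ++ [w], by simp, hB, hC,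
      cons_ch _ _ _ cA hz, cB, cC, ?_, ?_, rfl⟩
    · simp at this; try omega
    · have hp : (b :: ((A' ++ [u] ++ [z]) ++ (B' ++ [v]) ++ (C' ++ [w]))).Perm
          (z :: b :: ((A' ++ [u]) ++ (B' ++ [v]) ++ (C' ++ [w]))) := by
        simp only [List.perm_iff_count]; intro a
        simp [List.count_cons]; omega
      rw [hp.nodup_iff, List.nodup_cons]
      exact ⟨hzn, nd'⟩
    · simp at hlt ⊢; omega
  have hv : ∀ z, G.Adj v z → z ∈ b :: ((A' ++ [u]) ++ (B' ++ [v]) ++ (C' ++ [w])) := by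
    intro z hz
    by_contra hzn
    have := mxs _ ⟨b, A' ++ [u], B' ++ [v] ++ [z], C' ++ [w], hA, by simp, hC,
      cA, cons_ch _ _ _ cB hz, cC, ?_, ?_, rfl⟩
    · simp at this; try omega
    · have hp : (b :: ((A' ++ [u]) ++ (B' ++ [v] ++ [z]) ++ (C' ++ [w]))).Perm
          (z :: b :: ((A' ++ [u]) ++ (B' ++ [v]) ++ (C' ++ [w]))) := by
        simp only [List.perm_iff_count]; intro a
        simp [List.count_cons]; omega
      rw [hp.nodup_iff, List.nodup_cons]
      exact ⟨hzn, nd'⟩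
    · simp at hlt ⊢; omega
  have hw : ∀ z, G.Adj w z → z ∈ b :: ((A' ++ [u]) ++ (B' ++ [v]) ++ (C' ++ [w])) := by
    intro z hz
    by_contra hzn
    have := mxs _ ⟨b, A' ++ [u], B' ++ [v], C' ++ [w] ++ [z], hA, hB, by simp,
      cA, cB, cons_ch _ _ _ cC hz, ?_, ?_, rfl⟩
    · simp at this; try omega
    · have hp : (b :: ((A' ++ [u]) ++ (B' ++ [v]) ++ (C' ++ [w] ++ [z]))).Perm
          (z :: b :: ((A' ++ [u]) ++ (B' ++ [v]) ++ (C' ++ [w]))) := by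
        simp only [List.perm_iff_count]; intro a
        simp [List.count_cons]; omega
      rw [hp.nodup_iff, List.nodup_cons]
      exact ⟨hzn, nd'⟩
    · simp at hlt ⊢; omega
  have huv := hS.leaf_indep
  have huw := hS.swap23.leaf_indep
  have hvw := hS.swap12.swap23.leaf_indep
  have nd2 := nd'
  generalize A' ++ [u] = A at *
  generalize B' ++ [v] = B at *
  generalize C' ++ [w] = C at *
  have mu : u ∈ A := List.mem_of_getLast? hS.lA
  have mv : v ∈ B := List.mem_of_getLast? hS.lB
  have mw : w ∈ C := List.mem_of_getLast? hS.lC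
  have neuv : u ≠ v := by
    rintro rfl; simp [List.nodup_append] at nd2; try grind
  have neuw : u ≠ w := by
    rintro rfl; simp [List.nodup_append] at nd2; try grind
  have nevw : v ≠ w := by
    rintro rfl; simp [List.nodup_append] at nd2; try grind
  have hdeg : ∀ t, (∀ z, G.Adj t z → z ∈ b :: (A ++ B ++ C)) →
      G.degree t = ((b :: (A ++ B ++ C)).map (fun z => if G.Adj t z then 1 else 0)).sum := by
    intro t ht
    rw [← List.sum_toFinset _ nd', Finset.sum_boole, ← SimpleGraph.card_neighborFinset_eq_degree]
    simp only [Nat.cast_id]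
    congr 1
    ext z
    simp only [SimpleGraph.mem_neighborFinset, Finset.mem_filter, List.mem_toFinset]
    exact ⟨fun h => ⟨ht z h, h⟩, fun h => h.2⟩
  have hsum := hσ {u, v, w} (by
    intro x hx y hy _
    simp only [Finset.mem_insert, Finset.mem_singleton] at hx hy
    have h1 := mt (G.adj_symm (u := v) (v := u)) huv
    have h2 := mt (G.adj_symm (u := w) (v := u)) huw
    have h3 := mt (G.adj_symm (u := w) (v := v)) hvw
    rcases hx with rfl | rfl | rfl <;> rcases hy with rfl | rfl | rfl <;> simp_all)
    (Finset.card_eq_three.2 ⟨u, v, w, neuv, neuw, nevw, rfl⟩)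
  rw [Finset.sum_insert (by simp [neuv, neuw]), Finset.sum_pair nevw, hdeg u hu, hdeg v hv,
    hdeg w hw] at hsum
  have e1 := hS.leg hK (fun x y => if G.Adj x y then 1 else 0) (fun _ _ => rfl)
  have e2 := hS.swap12.leg hK (fun x y => if G.Adj x y then 1 else 0) (fun _ _ => rfl)
  have e3 := hS.swap23.swap12.leg hK (fun x y => if G.Adj x y then 1 else 0) (fun _ _ => rfl)
  have e4 := nodup_le _ nd'
  simp only [List.sum_map_add, List.map_cons, List.map_append, List.sum_cons, List.sum_append,
    List.length_cons, List.length_append] at hsum e1 e2 e3 e4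
  omega
end

section
/- Let G be a connected K_{1,4}-free simple graph of order n. If every pair of non-adjacent vertices of G has degree sum at least (2/3)n, then G has a Hamiltonian path. -/
open SimpleGraph Finset List

open scoped Classical

variable {V : Type*}

/-- `g 0, ..., g (m-1)` is a path of `G` on `m` vertices. -/
def SeqPath (G : SimpleGraph V) (m : ℕ) (g : ℕ → V) : Prop :=
  (∀ a b, a < m → b < m → g a = g b → a = b) ∧ ∀ k, k + 1 < m → G.Adj (g k) (g (k + 1))

theorem SeqPath.reindex {G : SimpleGraph V} {m : ℕ} {f : ℕ → V}
    (hinj : ∀ a b, a < m → b < m → f a = f b → a = b) (s : ℕ → ℕ)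
    (hs : ∀ k, k < m → s k < m) (hsi : ∀ a b, a < m → b < m → s a = s b → a = b)
    (hadj : ∀ k, k + 1 < m → G.Adj (f (s k)) (f (s (k + 1)))) :
    SeqPath G m (fun k => f (s k)) :=
  ⟨fun a b ha hb h => hsi a b ha hb (hinj _ _ (hs a ha) (hs b hb) h), hadj⟩

theorem exists_walk_of_seq {G : SimpleGraph V} (f : ℕ → V) (m : ℕ)
    (h : ∀ k, k < m → G.Adj (f k) (f (k + 1))) :
    ∃ p : G.Walk (f 0) (f m), p.support = (List.range (m + 1)).map f := by
  induction m with
  | zero => exact ⟨Walk.nil, by simp⟩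
  | succ m ih =>
    obtain ⟨p, hp⟩ := ih fun k hk => h k (by omega)
    refine ⟨p.concat (h m (by omega)), ?_⟩
    rw [Walk.support_concat, hp, List.range_succ (n := m + 1)]
    simp

section config
variable {G : SimpleGraph V} {m : ℕ} {f : ℕ → V}

theorem cfg0 (hmax : ∀ g, ¬ SeqPath G (m + 1) g)
  (hinj : ∀ a b, a < m + 1 → b < m + 1 → f a = f b → a = b)
  (hch : ∀ k, k + 1 < m → G.Adj (f k) (f (k + 1))) (hm : 0 < m) : ¬ G.Adj (f m) (f 0) := by
  intro h
  refine hmax _ (SeqPath.reindex hinj (fun k => if k = 0 then m else k - 1) ?_ ?_ ?_)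
  · intro k hk; split_ifs <;> omega
  · intro a b ha hb; split_ifs <;> omega
  · intro k hk
    rw [if_neg (by omega : ¬ k + 1 = 0)]
    rcases Nat.eq_zero_or_pos k with rfl | hk0
    · simpa using h
    · rw [if_neg (by omega)]
      have := hch (k - 1) (by omega)
      rwa [show k - 1 + 1 = k by omega] at this

theorem cfg1 (hmax : ∀ g, ¬ SeqPath G (m + 1) g)
  (hinj : ∀ a b, a < m + 1 → b < m + 1 → f a = f b → a = b)
  (hch : ∀ k, k + 1 < m → G.Adj (f k) (f (k + 1))) (hm : 0 < m) :
    ¬ G.Adj (f m) (f (m - 1)) := by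
  intro h
  refine hmax f ⟨hinj, fun k hk => ?_⟩
  by_cases hk' : k + 1 = m
  · subst hk'; simpa using h.symm
  · exact hch k (by omega)

theorem cfg2 (hmax : ∀ g, ¬ SeqPath G (m + 1) g)
  (hinj : ∀ a b, a < m + 1 → b < m + 1 → f a = f b → a = b)
  (hch : ∀ k, k + 1 < m → G.Adj (f k) (f (k + 1))) (i : ℕ) (hi : i + 1 < m)
    (h1 : G.Adj (f m) (f i)) (h2 : G.Adj (f m) (f (i + 1))) : False := by
  refine hmax _ (SeqPath.reindex hinj
    (fun k => if k ≤ i then k else if k = i + 1 then m else k - 1) ?_ ?_ ?_)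
  · intro k hk; split_ifs <;> omega
  · intro a b ha hb; split_ifs <;> omega
  · intro k hk
    grind [SimpleGraph.Adj.symm]

theorem cfg3 (hmax : ∀ g, ¬ SeqPath G (m + 1) g)
  (hinj : ∀ a b, a < m + 1 → b < m + 1 → f a = f b → a = b)
  (hch : ∀ k, k + 1 < m → G.Adj (f k) (f (k + 1))) (i : ℕ) (hi : i + 1 < m)
    (h1 : G.Adj (f m) (f i)) (h2 : G.Adj (f 0) (f (i + 1))) : False := by
  refine hmax _ (SeqPath.reindex hinj
    (fun k => if k = 0 then m else if k ≤ i + 1 then i + 1 - k else k - 1) ?_ ?_ ?_)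
  · intro k hk; split_ifs <;> omega
  · intro a b ha hb; split_ifs <;> omega
  · intro k hk
    grind [SimpleGraph.Adj.symm]

theorem cfg4 (hmax : ∀ g, ¬ SeqPath G (m + 1) g)
  (hinj : ∀ a b, a < m + 1 → b < m + 1 → f a = f b → a = b)
  (hch : ∀ k, k + 1 < m → G.Adj (f k) (f (k + 1))) (i : ℕ) (hi : i + 1 < m)
    (h1 : G.Adj (f m) (f (i + 1))) (h2 : G.Adj (f (m - 1)) (f i)) : False := by
  refine hmax _ (SeqPath.reindex hinj
    (fun k => if k ≤ i then k else if k < m then m + i - k else m) ?_ ?_ ?_)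
  · intro k hk; split_ifs <;> omega
  · intro a b ha hb; split_ifs <;> omega
  · intro k hk
    grind [SimpleGraph.Adj.symm]

theorem cfg5 (hmax : ∀ g, ¬ SeqPath G (m + 1) g)
  (hinj : ∀ a b, a < m + 1 → b < m + 1 → f a = f b → a = b)
  (hch : ∀ k, k + 1 < m → G.Adj (f k) (f (k + 1))) (i : ℕ) (hi : i + 2 < m)
    (h1 : G.Adj (f m) (f (i + 1))) (h2 : G.Adj (f (m - 1)) (f (i + 1)))
    (h3 : G.Adj (f i) (f (i + 2))) : False := by
  refine hmax _ (SeqPath.reindex hinj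
    (fun k => if k ≤ i then k else if k < m - 1 then k + 1 else if k < m then i + 1 else m)
    ?_ ?_ ?_)
  · intro k hk; split_ifs <;> omega
  · intro a b ha hb; split_ifs <;> omega
  · intro k hk
    grind [SimpleGraph.Adj.symm]

theorem cfg5' (hmax : ∀ g, ¬ SeqPath G (m + 1) g)
  (hinj : ∀ a b, a < m + 1 → b < m + 1 → f a = f b → a = b)
  (hch : ∀ k, k + 1 < m → G.Adj (f k) (f (k + 1))) (i : ℕ) (hi : i + 2 < m)
    (h1 : G.Adj (f m) (f (i + 1))) (h2 : G.Adj (f 0) (f (i + 1)))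
    (h3 : G.Adj (f i) (f (i + 2))) : False := by
  refine hmax _ (SeqPath.reindex hinj
    (fun k => if k = 0 then m else if k = 1 then i + 1 else if k ≤ i + 2 then k - 2 else k - 1)
    ?_ ?_ ?_)
  · intro k hk; split_ifs <;> omega
  · intro a b ha hb; split_ifs <;> omega
  · intro k hk
    grind [SimpleGraph.Adj.symm]

theorem cfg6 (hmax : ∀ g, ¬ SeqPath G (m + 1) g)
  (hinj : ∀ a b, a < m + 1 → b < m + 1 → f a = f b → a = b)
  (hch : ∀ k, k + 1 < m → G.Adj (f k) (f (k + 1))) (i j : ℕ) (hi : 0 < i) (hij : i + 1 < j)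
    (hj : j + 1 < m)
    (h1 : G.Adj (f m) (f i)) (h2 : G.Adj (f m) (f j))
    (h3 : G.Adj (f 0) (f (j - 1))) (h4 : G.Adj (f (m - 1)) (f (i + 1))) : False := by
  -- `f (i-1) ... f 0, f (j-1) ... f (i+1), f (m-1) ... f (j+1), f j, f m, f i`
  refine hmax _ (SeqPath.reindex hinj
    (fun k => if k < i then i - 1 - k else if k + 1 < j then j - 1 - (k - i)
      else if k + 1 < m then m - 1 - (k + 1 - j) else if k < m then m else i)
    ?_ ?_ ?_)
  · intro k hk; split_ifs <;> omega
  · intro a b ha hb; split_ifs <;> omega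
  · intro k hk
    have hs : ∀ a b, a = b + 1 → a < m → G.Adj (f a) (f b) := by
      intro a b h ha; subst h; exact (hch b ha).symm
    split_ifs <;> first
      | omega
      | (apply hs <;> omega)
      | (convert h3 using 2 <;> omega)
      | (convert h4.symm using 2 <;> omega)
      | (convert h2.symm using 2 <;> omega)
      | (convert h1 using 2 <;> omega)

end config

/-- A longest path that does not span a connected graph does not close up to a cycle. -/
theorem no_cycle [Fintype V] {G : SimpleGraph V} (hG : G.Connected) {m : ℕ} {c : ℕ → V}
    (hmax : ∀ g, ¬ SeqPath G (m + 1) g) (hc : SeqPath G m c) (hm : 0 < m)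
    (w : V) (hw : ∀ k, k < m → c k ≠ w) (hcl : m = 1 ∨ G.Adj (c (m - 1)) (c 0)) : False := by
  obtain ⟨hinj, hch⟩ := hc
  -- an edge leaving the cycle
  obtain ⟨u, i, hi, hu, hadj⟩ : ∃ u i, i < m ∧ (∀ k, k < m → c k ≠ u) ∧ G.Adj u (c i) := by
    by_contra hno
    push Not at hno
    have : ∀ (a b : V), G.Walk a b → (∃ k, k < m ∧ c k = a) → ∃ k, k < m ∧ c k = b := by
      intro a b p
      induction p with
      | nil => exact id
      | @cons a d b h p ih =>
        rintro ⟨k, hk, rfl⟩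
        apply ih
        by_contra hd
        push Not at hd
        exact hno d k hk hd h.symm
    obtain ⟨p⟩ := hG.preconnected (c 0) w
    obtain ⟨k, hk, hkw⟩ := this _ _ p ⟨0, hm, rfl⟩
    exact hw k hk hkw
  obtain ⟨f, hf, hfm⟩ : ∃ f : ℕ → V, (∀ k, k < m → f k = c k) ∧ f m = u :=
    ⟨fun k => if k < m then c k else u, fun k hk => if_pos hk, if_neg (by omega)⟩
  have hfi : ∀ a b, a < m + 1 → b < m + 1 → f a = f b → a = b := by
    intro a b ha hb hab
    rcases Nat.lt_succ_iff_lt_or_eq.1 ha with ha | rfl <;>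
      rcases Nat.lt_succ_iff_lt_or_eq.1 hb with hb | rfl
    · rw [hf a ha, hf b hb] at hab; exact hinj a b ha hb hab
    · rw [hf a ha, hfm] at hab; exact absurd hab (hu a ha)
    · rw [hf b hb, hfm] at hab; exact absurd hab.symm (hu b hb)
    · rfl
  refine hmax _ (SeqPath.reindex hfi
    (fun k => if k = 0 then m else if k + i ≤ m then k + i - 1 else k + i - 1 - m) ?_ ?_ ?_)
  · intro k hk; split_ifs <;> omega
  · intro a b ha hb; split_ifs <;> omega
  · intro k hk
    have hs : ∀ a b, b = a + 1 → b < m → G.Adj (f a) (f b) := by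
      intro a b h ha; subst h; rw [hf _ ha, hf _ (by omega)]; exact hch _ ha
    have h1 : G.Adj (f m) (f i) := by rw [hfm, hf _ hi]; exact hadj
    have h2 : m ≠ 1 → G.Adj (f (m - 1)) (f 0) := by
      intro h
      rw [hf _ (by omega), hf _ hm]; exact hcl.resolve_left h
    have h1' : ∀ a b, a = m → b = i → G.Adj (f a) (f b) := by rintro a b rfl rfl; exact h1
    have h2' : ∀ a b, m ≠ 1 → a = m - 1 → b = 0 → G.Adj (f a) (f b) := by
      rintro a b h rfl rfl; exact h2 h
    split_ifs <;> first
      | contradiction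
      | omega
      | (apply hs <;> omega)
      | (apply h1' <;> omega)
      | (apply h2' <;> omega)

theorem cross_false [Fintype V] {G : SimpleGraph V} (hG : G.Connected) {m : ℕ} {f : ℕ → V}
    (hmax : ∀ g, ¬ SeqPath G (m + 1) g) (hc : SeqPath G m f)
    (w : V) (hw : ∀ k, k < m → f k ≠ w) (i : ℕ) (hi : i + 1 < m)
    (h1 : G.Adj (f 0) (f (i + 1))) (h2 : G.Adj (f (m - 1)) (f i)) : False := by
  -- the cycle `f 0 ... f i, f (m-1) ... f (i+1)`
  have hch := hc.2
  let s : ℕ → ℕ := fun k => if k ≤ i then k else m + i - k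
  refine no_cycle hG hmax (c := fun k => f (s k)) (SeqPath.reindex hc.1 s ?_ ?_ ?_)
    (by omega) w ?_ (Or.inr ?_)
  · intro k hk; simp only [s]; split_ifs <;> omega
  · intro a b ha hb; simp only [s]; split_ifs <;> omega
  · intro k hk
    simp only [s]
    grind [SimpleGraph.Adj.symm]
  · intro k hk
    exact hw _ (by simp only [s]; split_ifs <;> omega)
  · simp only [s]
    rw [if_neg (by omega), if_pos (by omega)]
    convert h1.symm using 2; omega

theorem stmt5 {V : Type*} [Fintype V]
    (G : SimpleGraph V) (hG : G.Connected) (hK : K14Free G)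
    (hσ : ∀ u v : V, u ≠ v → ¬G.Adj u v →
      (2 : ℝ) / 3 * Fintype.card V ≤ (G.degree u + G.degree v : ℝ)) :
    ∃ (u v : V) (p : G.Walk u v), p.IsHamiltonian := by
  obtain ⟨v₀⟩ := hG.nonempty
  have hbound : ∀ k g, SeqPath G k g → k ≤ Fintype.card V := by
    intro k g h
    have := Fintype.card_le_of_injective (fun a : Fin k => g a)
      (fun a b hab => Fin.ext (h.1 a b a.2 b.2 hab))
    simpa using this
  obtain ⟨m, ⟨f₀, hf₀⟩, hm1, hmax⟩ : ∃ m, (∃ g, SeqPath G m g) ∧ 0 < m ∧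
      ∀ g, ¬ SeqPath G (m + 1) g := by
    have h1 : ∃ g, SeqPath G 1 g := ⟨fun _ => v₀, fun a b _ _ _ => by omega, fun k hk => by omega⟩
    let P : ℕ → Prop := fun k => ∃ g, SeqPath G k g
    have hP1 : 1 ≤ Fintype.card V := Fintype.card_pos_iff.2 ⟨v₀⟩
    refine ⟨Nat.findGreatest P (Fintype.card V), Nat.findGreatest_spec (P := P) hP1 h1,
      Nat.le_findGreatest (P := P) hP1 h1, fun g hg => ?_⟩
    have := Nat.le_findGreatest (P := P) (hbound _ g hg) ⟨g, hg⟩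
    omega
  by_cases hall : ∀ v, ∃ k, k < m ∧ f₀ k = v
  · -- the longest path is spanning
    obtain ⟨n, rfl⟩ : ∃ n, m = n + 1 := ⟨m - 1, by omega⟩
    obtain ⟨p, hp⟩ := exists_walk_of_seq (G := G) f₀ n fun k hk => hf₀.2 k (by omega)
    refine ⟨_, _, p, fun v => ?_⟩
    apply List.count_eq_one_of_mem
    · rw [hp]
      exact List.Nodup.map_on (fun a ha b hb hab =>
        hf₀.1 a b (List.mem_range.1 ha) (List.mem_range.1 hb) hab) List.nodup_range
    · rw [hp]
      obtain ⟨k, hk, rfl⟩ := hall v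
      exact List.mem_map.2 ⟨k, List.mem_range.2 hk, rfl⟩
  exfalso
  push Not at hall
  obtain ⟨w, hw₀⟩ := hall
  obtain ⟨f, hf, hfm⟩ : ∃ f : ℕ → V, (∀ k, k < m → f k = f₀ k) ∧ f m = w :=
    ⟨fun k => if k < m then f₀ k else w, fun k hk => if_pos hk, if_neg (by omega)⟩
  have hP : SeqPath G m f := ⟨fun a b ha hb h => hf₀.1 a b ha hb (by rwa [← hf a ha, ← hf b hb]),
    fun k hk => by rw [hf k (by omega), hf _ hk]; exact hf₀.2 k hk⟩
  have hw : ∀ k, k < m → f k ≠ w := fun k hk => by rw [hf k hk]; exact hw₀ k hk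
  have hch := hP.2
  have hinj : ∀ a b, a < m + 1 → b < m + 1 → f a = f b → a = b := by
    intro a b ha hb hab
    rcases Nat.lt_succ_iff_lt_or_eq.1 ha with ha | rfl <;>
      rcases Nat.lt_succ_iff_lt_or_eq.1 hb with hb | rfl
    · exact hP.1 a b ha hb hab
    · rw [hfm] at hab; exact absurd hab (hw a ha)
    · rw [hfm] at hab; exact absurd hab.symm (hw b hb)
    · rfl
  have hm2 : m ≠ 1 := fun h => no_cycle hG hmax hP hm1 w hw (Or.inl h)
  have hxy : ¬ G.Adj (f (m - 1)) (f 0) := fun h => no_cycle hG hmax hP hm1 w hw (Or.inr h)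
  have hwx := cfg0 hmax hinj hch hm1
  have hwy := cfg1 hmax hinj hch hm1
  have hne : ∀ a b, a < m + 1 → b < m + 1 → a ≠ b → f a ≠ f b :=
    fun a b ha hb hab h => hab (hinj a b ha hb h)
  -- neighbours of the end vertices lie on the path
  have hout : ∀ u, (∀ k, k < m → f k ≠ u) → ¬ G.Adj u (f 0) ∧ ¬ G.Adj u (f (m - 1)) := by
    intro u hu
    obtain ⟨g, hg, hgm⟩ : ∃ g : ℕ → V, (∀ k, k < m → g k = f k) ∧ g m = u :=
      ⟨fun k => if k < m then f k else u, fun k hk => if_pos hk, if_neg (by omega)⟩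
    have hgch : ∀ k, k + 1 < m → G.Adj (g k) (g (k + 1)) := fun k hk => by
      rw [hg k (by omega), hg _ hk]; exact hch k hk
    have hgi : ∀ a b, a < m + 1 → b < m + 1 → g a = g b → a = b := by
      intro a b ha hb hab
      rcases Nat.lt_succ_iff_lt_or_eq.1 ha with ha | rfl <;>
        rcases Nat.lt_succ_iff_lt_or_eq.1 hb with hb | rfl
      · rw [hg a ha, hg b hb] at hab; exact hP.1 a b ha hb hab
      · rw [hg a ha, hgm] at hab; exact absurd hab (hu a ha)
      · rw [hg b hb, hgm] at hab; exact absurd hab.symm (hu b hb)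
      · rfl
    have h0 := cfg0 hmax hgi hgch hm1
    have h1 := cfg1 hmax hgi hgch hm1
    rw [hgm, hg _ (by omega)] at h0 h1
    exact ⟨h0, h1⟩
  -- the forced edges from `K_{1,4}`-freeness
  have hKy : ∀ i, i + 3 < m → G.Adj (f m) (f (i + 1)) → G.Adj (f (m - 1)) (f (i + 1)) →
      G.Adj (f (m - 1)) (f (i + 2)) := by
    intro i hi h1 h2
    by_contra h3
    refine hK ⟨f (i + 1), f m, f i, f (i + 2), f (m - 1), hne _ _ (by omega) (by omega) (by omega),
      hne _ _ (by omega) (by omega) (by omega), hne _ _ (by omega) (by omega) (by omega),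
      hne _ _ (by omega) (by omega) (by omega), hne _ _ (by omega) (by omega) (by omega),
      hne _ _ (by omega) (by omega) (by omega), h1.symm, (hch i (by omega)).symm,
      hch (i + 1) (by omega), h2.symm, ?_, ?_, hwy, ?_, ?_, fun h => h3 h.symm⟩
    · exact fun h => cfg2 hmax hinj hch i (by omega) h h1
    · exact fun h => cfg2 hmax hinj hch (i + 1) (by omega) h1 h
    · exact fun h => cfg5 hmax hinj hch i (by omega) h1 h2 h
    · exact fun h => cfg4 hmax hinj hch i (by omega) h1 h.symm
  have hKx : ∀ i, 0 < i → i + 2 < m → G.Adj (f m) (f (i + 1)) → G.Adj (f 0) (f (i + 1)) →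
      G.Adj (f 0) (f i) := by
    intro i hi0 hi h1 h2
    by_contra h3
    refine hK ⟨f (i + 1), f m, f i, f (i + 2), f 0, hne _ _ (by omega) (by omega) (by omega),
      hne _ _ (by omega) (by omega) (by omega), hne _ _ (by omega) (by omega) (by omega),
      hne _ _ (by omega) (by omega) (by omega), hne _ _ (by omega) (by omega) (by omega),
      hne _ _ (by omega) (by omega) (by omega), h1.symm, (hch i (by omega)).symm,
      hch (i + 1) (by omega), h2.symm, ?_, ?_, hwx, ?_, fun h => h3 h.symm, ?_⟩
    · exact fun h => cfg2 hmax hinj hch i (by omega) h h1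
    · exact fun h => cfg2 hmax hinj hch (i + 1) (by omega) h1 h
    · exact fun h => cfg5' hmax hinj hch i hi h1 h2 h
    · exact fun h => cfg3 hmax hinj hch (i + 1) (by omega) h1 h.symm
  -- at most one common neighbour of the three vertices
  have hone : ∀ i j, i < j → j + 1 < m → G.Adj (f m) (f i) → G.Adj (f (m - 1)) (f i) →
      G.Adj (f m) (f j) → G.Adj (f 0) (f j) → False := by
    intro i j hij hj h1 h2 h3 h4
    have hi0 : i ≠ 0 := by rintro rfl; exact hwx h1
    have hij' : i + 1 ≠ j := by rintro rfl; exact cfg2 hmax hinj hch i (by omega) h1 h3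
    obtain ⟨i, rfl⟩ : ∃ k, i = k + 1 := ⟨i - 1, by omega⟩
    obtain ⟨j, rfl⟩ : ∃ k, j = k + 1 := ⟨j - 1, by omega⟩
    exact cfg6 hmax hinj hch (i + 1) (j + 1) (by omega) (by omega) hj h1 h3
      (hKx j (by omega) (by omega) h3 h4) (hKy i (by omega) h1 h2)
  -- counting
  let X : Finset ℕ := (Finset.range (m - 1)).filter fun i => G.Adj (f 0) (f (i + 1))
  let Y : Finset ℕ := (Finset.range (m - 1)).filter fun i => G.Adj (f (m - 1)) (f i)
  let W : Finset ℕ := (Finset.range (m - 1)).filter fun i => G.Adj (f m) (f i)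
  let Z : Finset ℕ := (Finset.range (m - 1)).filter fun i =>
    G.Adj (f (m - 1)) (f (i + 1)) ∧ G.Adj (f m) (f (i + 1)) ∧ ¬ G.Adj (f 0) (f (i + 1))
  have hdx : G.degree (f 0) ≤ X.card := by
    rw [← G.card_neighborFinset_eq_degree]
    refine (Finset.card_le_card (t := X.image fun i => f (i + 1)) ?_).trans Finset.card_image_le
    intro u hu
    rw [SimpleGraph.mem_neighborFinset] at hu
    obtain ⟨k, hk, rfl⟩ : ∃ k, k < m ∧ f k = u := by
      by_contra h; push Not at h
      exact (hout u h).1 hu.symm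
    have hk0 : k ≠ 0 := by rintro rfl; exact G.loopless.irrefl _ hu
    obtain ⟨k, rfl⟩ : ∃ l, k = l + 1 := ⟨k - 1, by omega⟩
    exact Finset.mem_image.2 ⟨k, Finset.mem_filter.2 ⟨Finset.mem_range.2 (by omega), hu⟩, rfl⟩
  have hdy : G.degree (f (m - 1)) ≤ Y.card := by
    rw [← G.card_neighborFinset_eq_degree]
    refine (Finset.card_le_card (t := Y.image f) ?_).trans Finset.card_image_le
    intro u hu
    rw [SimpleGraph.mem_neighborFinset] at hu
    obtain ⟨k, hk, rfl⟩ : ∃ k, k < m ∧ f k = u := by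
      by_contra h; push Not at h
      exact (hout u h).2 hu.symm
    have hk0 : k ≠ m - 1 := by rintro rfl; exact G.loopless.irrefl _ hu
    exact Finset.mem_image.2 ⟨k, Finset.mem_filter.2 ⟨Finset.mem_range.2 (by omega), hu⟩, rfl⟩
  have hdw : G.degree (f m) + (m + 1) ≤ W.card + Fintype.card V := by
    have hIm : ((Finset.range (m + 1)).image f).card = m + 1 := by
      rw [Finset.card_image_of_injOn, Finset.card_range]
      intro a ha b hb hab
      exact hinj a b (by simpa using ha) (by simpa using hb) hab
    have hc := Finset.card_add_card_compl ((Finset.range (m + 1)).image f)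
    have hd : G.degree (f m) ≤ (W.image f).card + ((Finset.range (m + 1)).image f)ᶜ.card := by
      rw [← G.card_neighborFinset_eq_degree]
      refine (Finset.card_le_card ?_).trans (Finset.card_union_le _ _)
      intro u hu
      rw [SimpleGraph.mem_neighborFinset] at hu
      by_cases hu' : u ∈ (Finset.range (m + 1)).image f
      · obtain ⟨k, hk, rfl⟩ := Finset.mem_image.1 hu'
        have hk := Finset.mem_range.1 hk
        have hk0 : k ≠ m := by rintro rfl; exact G.loopless.irrefl _ hu
        have hk1 : k ≠ m - 1 := by rintro rfl; exact hwy hu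
        exact Finset.mem_union_left _ (Finset.mem_image.2
          ⟨k, Finset.mem_filter.2 ⟨Finset.mem_range.2 (by omega), hu⟩, rfl⟩)
      · exact Finset.mem_union_right _ (Finset.mem_compl.2 hu')
    have : (W.image f).card ≤ W.card := Finset.card_image_le
    omega
  have hXYW : Disjoint X (Y ∪ W) := by
    rw [Finset.disjoint_left]
    intro i hi hi'
    obtain ⟨hir, hi⟩ := Finset.mem_filter.1 hi
    have hir := Finset.mem_range.1 hir
    rcases Finset.mem_union.1 hi' with h | h
    · exact cross_false hG hmax hP w hw i (by omega) hi (Finset.mem_filter.1 h).2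
    · exact cfg3 hmax hinj hch i (by omega) (Finset.mem_filter.1 h).2 hi
  have hZ : Disjoint (X ∪ (Y ∪ W)) Z := by
    rw [Finset.disjoint_left]
    intro i hi hi'
    obtain ⟨hir, hz1, hz2, hz3⟩ := Finset.mem_filter.1 hi'
    have hir := Finset.mem_range.1 hir
    rcases Finset.mem_union.1 hi with h | h
    · exact hz3 (Finset.mem_filter.1 h).2
    rcases Finset.mem_union.1 h with h | h
    · exact cfg4 hmax hinj hch i (by omega) hz2 (Finset.mem_filter.1 h).2
    · exact cfg2 hmax hinj hch i (by omega) (Finset.mem_filter.1 h).2 hz2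
  have hsub : X ∪ (Y ∪ W) ∪ Z ⊆ Finset.range (m - 1) := by
    refine Finset.union_subset (Finset.union_subset (Finset.filter_subset _ _)
      (Finset.union_subset (Finset.filter_subset _ _) (Finset.filter_subset _ _)))
      (Finset.filter_subset _ _)
  have hYW : (Y ∩ W).card ≤ Z.card + 1 := by
    let O : Finset ℕ := (Y ∩ W).filter fun i => G.Adj (f 0) (f i)
    have hO : O.card ≤ 1 := by
      rw [Finset.card_le_one]
      have key : ∀ a ∈ O, ∀ b ∈ O, ¬ a < b := by
        intro a ha b hb hab
        obtain ⟨ha, -⟩ := Finset.mem_filter.1 ha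
        obtain ⟨hb, hb3⟩ := Finset.mem_filter.1 hb
        obtain ⟨ha1, ha2⟩ := Finset.mem_inter.1 ha
        obtain ⟨-, hb2⟩ := Finset.mem_inter.1 hb
        obtain ⟨hbr, hb2⟩ := Finset.mem_filter.1 hb2
        have hbr := Finset.mem_range.1 hbr
        exact hone a b hab (by omega) (Finset.mem_filter.1 ha2).2 (Finset.mem_filter.1 ha1).2
          hb2 hb3
      intro a ha b hb
      have h1 := key a ha b hb
      have h2 := key b hb a ha
      omega
    have hsub2 : Y ∩ W ⊆ O ∪ Z.image (· + 1) := by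
      intro i hi
      by_cases h : G.Adj (f 0) (f i)
      · exact Finset.mem_union_left _ (Finset.mem_filter.2 ⟨hi, h⟩)
      · obtain ⟨hy, hw'⟩ := Finset.mem_inter.1 hi
        obtain ⟨hir, hy⟩ := Finset.mem_filter.1 hy
        have hir := Finset.mem_range.1 hir
        have hw' := (Finset.mem_filter.1 hw').2
        have hi0 : i ≠ 0 := by rintro rfl; exact hwx hw'
        obtain ⟨i, rfl⟩ : ∃ k, i = k + 1 := ⟨i - 1, by omega⟩
        exact Finset.mem_union_right _ (Finset.mem_image.2
          ⟨i, Finset.mem_filter.2 ⟨Finset.mem_range.2 (by omega), hy, hw', h⟩, rfl⟩)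
    have h1 := (Finset.card_le_card hsub2).trans (Finset.card_union_le _ _)
    have h2 : (Z.image (· + 1)).card ≤ Z.card := Finset.card_image_le
    omega
  have hc1 := Finset.card_le_card hsub
  rw [Finset.card_union_of_disjoint hZ, Finset.card_union_of_disjoint hXYW,
    Finset.card_range] at hc1
  have hc2 := Finset.card_union_add_card_inter Y W
  have hfin : G.degree (f 0) + G.degree (f (m - 1)) + G.degree (f m) + 1 ≤ Fintype.card V := by
    omega
  have hs1 := hσ (f 0) (f (m - 1)) (hne _ _ (by omega) (by omega) (by omega)) fun h => hxy h.symm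
  have hs2 := hσ (f m) (f (m - 1)) (hne _ _ (by omega) (by omega) (by omega)) hwy
  have hs3 := hσ (f m) (f 0) (hne _ _ (by omega) (by omega) (by omega)) hwx
  have hfin' : (G.degree (f 0) + G.degree (f (m - 1)) + G.degree (f m) + 1 : ℝ)
      ≤ Fintype.card V := by exact_mod_cast hfin
  linarith
end

section
/- Let G be a connected finite simple graph and let T be a spanning tree of G that has the minimum number of leaves among all spanning trees of G. If T has at least one branch vertex, then L(T) is an independent set of G. -/
open SimpleGraph Finset List

open scoped Classical

variable {V : Type*}

lemma exists_branch_on_path {V : Type*} [Fintype V] (T : SimpleGraph V) (hTree : T.IsTree)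
    (hB : (branchSet T).Nonempty) {u v : V} (p : T.Walk u v) (hp : p.IsPath)
    (hu : T.degree u = 1) (hv : T.degree v = 1) (huv : u ≠ v) :
    ∃ w ∈ p.support, 3 ≤ T.degree w := by
  by_contra! hcon
  have hlen : 0 < p.length := by
    rcases Nat.eq_zero_or_pos p.length with h | h
    · exact absurd (Walk.eq_of_length_eq_zero h) huv
    · exact h
  have hclosed : ∀ x ∈ p.support, ∀ y, T.Adj x y → y ∈ p.support := by
    intro x hx y hxy
    by_contra hy
    obtain ⟨i, rfl, hi⟩ := Walk.mem_support_iff_exists_getVert.1 hx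
    have hyi : ∀ j, y ≠ p.getVert j := fun j h => hy (h ▸ p.getVert_mem_support j)
    have two : i < p.length → 2 ≤ T.degree (p.getVert i) := by
      intro h
      have : ({y, p.getVert (i+1)} : Finset V) ⊆ T.neighborFinset (p.getVert i) := by
        intro z hz
        simp only [Finset.mem_insert, Finset.mem_singleton] at hz
        rw [mem_neighborFinset]
        rcases hz with rfl | rfl
        · exact hxy
        · exact p.adj_getVert_succ h
      simpa [Finset.card_pair (hyi (i+1))] using Finset.card_le_card this
    rcases Nat.lt_or_ge i p.length with h | h
    · rcases Nat.eq_zero_or_pos i with h0 | h0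
      · subst h0
        have := two h
        have aux : ∀ z, z = u → T.degree z = 1 := by rintro _ rfl; exact hu
        have := aux _ p.getVert_zero
        omega
      · obtain ⟨k, rfl⟩ : ∃ k, i = k + 1 := ⟨i - 1, by omega⟩
        have hne : p.getVert k ≠ p.getVert (k+1+1) := by
          intro he
          have := hp.getVert_injOn (by simp; omega) (by simp; omega) he
          omega
        have : ({y, p.getVert k, p.getVert (k+1+1)} : Finset V) ⊆
            T.neighborFinset (p.getVert (k+1)) := by
          intro z hz
          simp only [Finset.mem_insert, Finset.mem_singleton] at hz
          rw [mem_neighborFinset]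
          rcases hz with rfl | rfl | rfl
          · exact hxy
          · exact (p.adj_getVert_succ (by omega)).symm
          · exact p.adj_getVert_succ h
        have h3 := Finset.card_le_card this
        rw [Finset.card_eq_three.2 ⟨_, _, _, hyi k, hyi _, hne, rfl⟩, card_neighborFinset_eq_degree] at h3
        have := hcon _ hx
        omega
    · have hi' : i = p.length := by omega
      obtain ⟨k, rfl⟩ : ∃ k, i = k + 1 := ⟨i - 1, by omega⟩
      have : ({y, p.getVert k} : Finset V) ⊆ T.neighborFinset (p.getVert (k+1)) := by
        intro z hz
        simp only [Finset.mem_insert, Finset.mem_singleton] at hz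
        rw [mem_neighborFinset]
        rcases hz with rfl | rfl
        · exact hxy
        · exact (p.adj_getVert_succ (by omega)).symm
      have h2 := Finset.card_le_card this
      rw [Finset.card_pair (hyi k), card_neighborFinset_eq_degree, hi', Walk.getVert_length] at h2
      omega
  obtain ⟨w, hw⟩ := hB
  have hw3 : 3 ≤ T.degree w := by simpa [branchSet] using hw
  obtain ⟨q⟩ := hTree.connected.preconnected u w
  have key : ∀ {x y : V} (_ : T.Walk x y), x ∈ p.support → y ∈ p.support := by
    intro x y q
    induction q with
    | nil => exact id
    | cons h _ ih => exact fun hx => ih (hclosed _ hx _ h)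
  have := hcon w (key q p.start_mem_support)
  omega

theorem stmt9 {V : Type*} [Fintype V] (G T : SimpleGraph V) (hG : G.Connected)
    (hT : T ≤ G) (hTree : T.IsTree)
    (hC1 : ∀ T' : SimpleGraph V, T' ≤ G → T'.IsTree →
      (leafSet T).card ≤ (leafSet T').card)
    (hB : (branchSet T).Nonempty) :
    IsIndepFinset G (leafSet T) := by
  intro u hu v hv huv hadj
  have hu1 : T.degree u = 1 := by simpa [leafSet] using hu
  have hv1 : T.degree v = 1 := by simpa [leafSet] using hv
  obtain ⟨p, hp⟩ := hTree.connected.exists_isPath u v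
  obtain ⟨a, ha, ha3⟩ := exists_branch_on_path T hTree hB p hp hu1 hv1 huv
  have hau : a ≠ u := by rintro rfl; omega
  have hav : a ≠ v := by rintro rfl; omega
  obtain ⟨i, hia, hi⟩ := Walk.mem_support_iff_exists_getVert.1 ha
  have hi0 : 0 < i := by
    rcases Nat.eq_zero_or_pos i with h | h
    · subst h; simp at hia; exact absurd hia.symm hau
    · exact h
  have hil : i < p.length := by
    rcases hi.lt_or_eq with h | h
    · exact h
    · subst h; simp at hia; exact absurd hia.symm hav
  obtain ⟨b, hb⟩ : ∃ b, b = p.getVert (i+1) := ⟨_, rfl⟩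
  have hab : T.Adj a b := by rw [← hia, hb]; exact p.adj_getVert_succ hil
  have hbu : b ≠ u := by
    intro h
    have h' : p.getVert (i+1) = p.getVert 0 := by rw [← hb, h, Walk.getVert_zero]
    have := hp.getVert_injOn (by simp; omega) (by simp) h'
    omega
  have hnadj : ¬ T.Adj u v := by
    intro h
    have h1 := hTree.isAcyclic.eq_snd_of_adj_start hp h p.end_mem_support
    have h' : p.getVert p.length = p.getVert 1 := by rw [Walk.getVert_length]; exact h1
    have := hp.getVert_injOn (by simp) (by simp; omega) h'
    omega
  have he : s(a, b) ∈ p.edges := by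
    rw [← hia, hb]
    have h : p.toSubgraph.Adj (p.getVert i) (p.getVert (i + 1)) :=
      p.toSubgraph_adj_iff.2 ⟨i, rfl, hil⟩
    rw [← Subgraph.mem_edgeSet] at h
    exact p.mem_edges_toSubgraph.1 h
  let H : SimpleGraph V := T ⊔ edge u v
  have hTH : T ≤ H := le_sup_left
  let T' : SimpleGraph V := H.deleteEdges {s(a, b)}
  have hHadj : ∀ x y, H.Adj x y ↔ T.Adj x y ∨ (x = u ∧ y = v ∨ x = v ∧ y = u) := by
    intro x y
    simp only [H, sup_adj, edge_adj]
    grind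
  have hadj' : ∀ x y, T'.Adj x y ↔ (T.Adj x y ∨ (x = u ∧ y = v ∨ x = v ∧ y = u)) ∧
      ¬ (x = a ∧ y = b ∨ x = b ∧ y = a) := by
    intro x y
    simp only [T', deleteEdges_adj, hHadj, Set.mem_singleton_iff, Sym2.eq_iff]
  have hT'G : T' ≤ G := by
    intro x y h
    rcases ((hadj' x y).1 h).1 with h | ⟨rfl, rfl⟩ | ⟨rfl, rfl⟩
    · exact hT h
    · exact hadj
    · exact hadj.symm
  have hvu : H.Adj v u := (hHadj _ _).2 (by simp)
  have hcyc : (Walk.cons hvu (p.mapLe hTH)).IsCycle := by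
    rw [Walk.cons_isCycle_iff]
    refine ⟨hp.mapLe hTH, ?_⟩
    intro h
    rw [Walk.edges_mapLe_eq_edges] at h
    exact hnadj (p.adj_of_mem_edges h).symm
  have hconn : T'.Connected := by
    apply (hTree.connected.mono hTH).connected_delete_edge_of_not_isBridge
    intro hbr
    refine hbr.notMem_edges_of_isCycle hcyc ?_
    rw [Walk.edges_cons, Walk.edges_mapLe_eq_edges]
    exact List.mem_cons_of_mem _ he
  have hT'tree : T'.IsTree := by
    rw [isTree_iff_connected_and_card]
    refine ⟨hconn, ?_⟩
    rw [← (isTree_iff_connected_and_card.1 hTree).2]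
    congr 1
    have hset : T'.edgeSet = (insert s(u, v) T.edgeSet) \ {s(a, b)} := by
      ext e
      induction e using Sym2.ind with
      | _ x y =>
        simp only [mem_edgeSet, hadj', Set.mem_sdiff, Set.mem_insert_iff, Set.mem_singleton_iff,
          Sym2.eq_iff]
        tauto
    rw [Nat.card_coe_set_eq, Nat.card_coe_set_eq, hset, Set.ncard_sdiff_singleton_of_mem,
      Set.ncard_insert_of_notMem]
    · rfl
    · simpa using hnadj
    · exact Set.mem_insert_of_mem _ hab
  clear_value T'
  have hle := hC1 T' hT'G hT'tree
  have hsub : leafSet T' ⊆ insert b (((leafSet T).erase u).erase v) := by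
    intro x hx
    have hx1 : T'.degree x = 1 := by simpa [leafSet] using hx
    by_cases hxb : x = b
    · simp [hxb]
    have huniq := degree_eq_one_iff_existsUnique_adj.1 hx1
    have hxu : x ≠ u := by
      rintro rfl
      obtain ⟨c, hc, -⟩ := degree_eq_one_iff_existsUnique_adj.1 hu1
      have h1 : T'.Adj x c := (hadj' _ _).2 ⟨Or.inl hc, by rintro (⟨h, -⟩ | ⟨h, -⟩) <;> [exact hau h.symm; exact hxb h]⟩
      have h2 : T'.Adj x v := (hadj' _ _).2 ⟨Or.inr (Or.inl ⟨rfl, rfl⟩), by rintro (⟨h, -⟩ | ⟨h, -⟩) <;> [exact hau h.symm; exact hxb h]⟩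
      exact hnadj (huniq.unique h1 h2 ▸ hc)
    have hxv : x ≠ v := by
      rintro rfl
      obtain ⟨c, hc, -⟩ := degree_eq_one_iff_existsUnique_adj.1 hv1
      have h1 : T'.Adj x c := (hadj' _ _).2 ⟨Or.inl hc, by rintro (⟨h, -⟩ | ⟨h, -⟩) <;> [exact hav h.symm; exact hxb h]⟩
      have h2 : T'.Adj x u := (hadj' _ _).2 ⟨Or.inr (Or.inr ⟨rfl, rfl⟩), by rintro (⟨h, -⟩ | ⟨h, -⟩) <;> [exact hav h.symm; exact hxb h]⟩
      exact hnadj (huniq.unique h1 h2 ▸ hc.symm)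
    have hxa : x ≠ a := by
      rintro rfl
      have : (T.neighborFinset x).erase b ⊆ T'.neighborFinset x := by
        intro z hz
        rw [Finset.mem_erase, mem_neighborFinset] at hz
        rw [mem_neighborFinset, hadj']
        refine ⟨Or.inl hz.2, ?_⟩
        rintro (⟨-, h⟩ | ⟨h, -⟩)
        · exact hz.1 h
        · exact hxb h
      have h := Finset.card_le_card this
      have h2 := Finset.pred_card_le_card_erase (s := T.neighborFinset x) (a := b)
      rw [card_neighborFinset_eq_degree] at h h2
      omega
    have hxT : T.degree x = 1 := by
      rw [← hx1, ← card_neighborFinset_eq_degree, ← card_neighborFinset_eq_degree]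
      congr 1
      ext z
      rw [mem_neighborFinset, mem_neighborFinset, hadj']
      simp [hxu, hxv, hxa, hxb]
    simp [hxu, hxv, leafSet, hxT]
  have h1 := Finset.card_le_card hsub
  have h2 := Finset.card_insert_le b (((leafSet T).erase u).erase v)
  have h3 := Finset.card_erase_add_one hu
  have h4 := Finset.card_erase_add_one (Finset.mem_erase.2 ⟨huv.symm, hv⟩)
  omega
end

section
/- Let G be a connected finite simple graph and let T be a spanning tree of G that has the minimum number of leaves among all spanning trees of G. Let b be a branch vertex of T, let x be a neighbor of b in T, and let s be a leaf of T such that b lies on the unique path in T from s to x. Then sx is not an edge of G. -/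
open SimpleGraph Finset List

open scoped Classical

variable {V : Type*}

/-- Let `T` be a spanning tree of a connected graph `G` with the minimum
number of leaves, `b` a branch vertex of `T`, `x` a neighbor of `b` in `T`, and `s` a leaf
of `T` such that `b` lies on the (unique) path of `T` from `s` to `x`. Then `sx ∉ E(G)`. -/
theorem stmt10 {V : Type*} [Fintype V] (G T : SimpleGraph V) (hG : G.Connected)
    (hT : T ≤ G) (hTree : T.IsTree)
    (hC1 : ∀ T' : SimpleGraph V, T' ≤ G → T'.IsTree →
      (leafSet T).card ≤ (leafSet T').card)
    (b x s : V) (hb : b ∈ branchSet T) (hx : T.Adj b x) (hs : s ∈ leafSet T)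
    (hbpath : ∀ p : T.Walk s x, p.IsPath → b ∈ p.support) :
    ¬ G.Adj s x := by
  intro hsx
  have hb3 : 3 ≤ T.degree b := by simpa [branchSet] using hb
  have hs1 : T.degree s = 1 := by simpa [leafSet] using hs
  have hsb : s ≠ b := by rintro rfl; omega
  have hsxne : s ≠ x := hsx.ne
  have hbx : b ≠ x := hx.ne
  have hnsx : ¬ T.Adj s x := by
    intro h
    have h1 := hbpath h.toWalk (by simp [hsxne])
    simp only [Adj.toWalk, Walk.support_cons, Walk.support_nil, List.mem_cons,
      List.not_mem_nil, or_false] at h1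
    rcases h1 with h1 | h1
    · exact hsb h1.symm
    · exact hbx h1
  obtain ⟨T', hT'⟩ : ∃ T' : SimpleGraph V, ∀ u v, T'.Adj u v ↔
      (T.Adj u v ∧ s(u, v) ≠ s(b, x)) ∨ s(u, v) = s(s, x) := by
    refine ⟨⟨fun u v => (T.Adj u v ∧ s(u, v) ≠ s(b, x)) ∨ s(u, v) = s(s, x), ?_, ?_⟩,
      fun u v => Iff.rfl⟩
    · refine ⟨fun u v h => ?_⟩
      rw [Sym2.eq_swap (a := v), T.adj_comm]
      exact h
    · refine ⟨fun u h => ?_⟩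
      rcases h with h | h
      · exact T.irrefl h.1
      · rw [Sym2.eq_iff] at h
        grind
  have hle : T' ≤ G := by
    intro u v h
    rcases (hT' u v).1 h with h | h
    · exact hT h.1
    · rw [Sym2.eq_iff] at h
      rcases h with ⟨rfl, rfl⟩ | ⟨rfl, rfl⟩
      · exact hsx
      · exact hsx.symm
  have hT'sx : T'.Adj s x := (hT' s x).2 (Or.inr rfl)
  have hreach : T'.Reachable b x := by
    obtain ⟨p, hp⟩ := hTree.connected.exists_isPath s x
    have hbp := hbpath p hp
    have hxn : x ∉ (p.takeUntil b hbp).support := 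
      Walk.endpoint_notMem_support_takeUntil hp hbp hbx.symm
    have hr : T'.Reachable s b := by
      refine ⟨(p.takeUntil b hbp).transfer T' ?_⟩
      intro e he
      induction e using Sym2.ind with
      | _ u v =>
        rw [mem_edgeSet, hT']
        refine Or.inl ⟨Walk.adj_of_mem_edges _ he, fun h => ?_⟩
        rw [h] at he
        exact hxn (Walk.snd_mem_support_of_mem_edges _ he)
    exact hr.symm.trans hT'sx.reachable
  have hconn : T'.Connected := by
    haveI := hTree.connected.nonempty
    refine ⟨fun u v => ?_⟩
    obtain ⟨p⟩ := hTree.connected.preconnected u v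
    induction p with
    | nil => exact Reachable.refl _
    | @cons u v w h p ih =>
      refine Reachable.trans ?_ ih
      by_cases he : s(u, v) = s(b, x)
      · rw [Sym2.eq_iff] at he
        rcases he with ⟨rfl, rfl⟩ | ⟨rfl, rfl⟩
        · exact hreach
        · exact hreach.symm
      · exact ((hT' u v).2 (Or.inl ⟨h, he⟩)).reachable
  have hedge : T'.edgeSet = insert s(s, x) (T.edgeSet \ {s(b, x)}) := by
    ext e
    induction e using Sym2.ind with
    | _ u v =>
      rw [mem_edgeSet, hT']
      simp only [Set.mem_insert_iff, Set.mem_sdiff, mem_edgeSet, Set.mem_singleton_iff]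
      tauto
  have hcard : Nat.card T'.edgeSet = Nat.card T.edgeSet := by
    rw [Nat.card_coe_set_eq, Nat.card_coe_set_eq, hedge]
    exact Set.ncard_exchange (by simpa using hnsx) (by simpa using hx)
  have htree' : T'.IsTree := by
    rw [isTree_iff_connected_and_card]
    exact ⟨hconn, by rw [hcard]; exact (isTree_iff_connected_and_card.1 hTree).2⟩
  have hlt : (leafSet T').card < (leafSet T).card := by
    apply Finset.card_lt_card
    rw [Finset.ssubset_iff_of_subset]
    · refine ⟨s, hs, ?_⟩
      have hN : T'.neighborFinset s = insert x (T.neighborFinset s) := by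
        ext v
        simp only [mem_neighborFinset, hT', Finset.mem_insert, Sym2.eq_iff, ne_eq]
        grind
      simp only [leafSet, Finset.mem_filter, Finset.mem_univ, true_and]
      rw [← card_neighborFinset_eq_degree, hN, Finset.card_insert_of_notMem (by simpa using hnsx),
        card_neighborFinset_eq_degree, hs1]
      simp
    · intro v hv
      simp only [leafSet, Finset.mem_filter, Finset.mem_univ, true_and] at hv ⊢
      by_cases hvs : v = s
      · rw [hvs, hs1]
      by_cases hvb : v = b
      · exfalso
        have hN : T'.neighborFinset b = (T.neighborFinset b).erase x := by
          ext v
          simp only [mem_neighborFinset, hT', Finset.mem_erase, Sym2.eq_iff, ne_eq]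
          grind
        rw [hvb, ← card_neighborFinset_eq_degree, hN, Finset.card_erase_of_mem (by simpa using hx),
          card_neighborFinset_eq_degree] at hv
        omega
      by_cases hvx : v = x
      · have hN : T'.neighborFinset x = insert s ((T.neighborFinset x).erase b) := by
          ext v
          simp only [mem_neighborFinset, hT', Finset.mem_insert, Finset.mem_erase, Sym2.eq_iff,
            ne_eq]
          grind
        have hxs : ¬ T.Adj x s := fun h => hnsx h.symm
        have hpos : 0 < T.degree x := (T.degree_pos_iff_exists_adj x).2 ⟨b, hx.symm⟩
        rw [hvx, ← card_neighborFinset_eq_degree, hN,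
          Finset.card_insert_of_notMem (by simp [hxs]),
          Finset.card_erase_of_mem (by simpa using hx.symm),
          card_neighborFinset_eq_degree] at hv
        rw [hvx]
        omega
      · have hN : T'.neighborFinset v = T.neighborFinset v := by
          ext w
          simp only [mem_neighborFinset, hT', Sym2.eq_iff, ne_eq]
          grind
        rw [← card_neighborFinset_eq_degree, hN, card_neighborFinset_eq_degree] at hv
        exact hv
  exact absurd (hC1 T' hle htree') (by omega)
end

section
/- Let G be a connected finite simple graph and let T be a spanning tree of G chosen so that (C1) |L(T)| is minimum among all spanning trees of G and (C2) |V(R_Stem(T))| is maximum subject to (C1), and suppose B(T) ≠ ∅. Let b, r be branch vertices of T such that the path P_T[b,r] contains no branch vertex other than b and r, let s be a leaf of T, and let x be a vertex of P_T[b,r] with x ≠ b; denote by x⁻ the predecessor of x on P_T[b,r] oriented from b to r. If sx is an edge of G, then sx⁻ is not an edge of G. -/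
open SimpleGraph Finset List

open scoped Classical

variable {V : Type*}

/-- Move the vertex `s` into the edge `x xm`. -/
def moveLeaf (T : SimpleGraph V) (s x xm : V) : SimpleGraph V :=
  SimpleGraph.fromRel fun u v =>
    (T.Adj u v ∧ u ≠ s ∧ v ≠ s ∧ ¬ (u = x ∧ v = xm) ∧ ¬ (u = xm ∧ v = x)) ∨
      (u = s ∧ (v = x ∨ v = xm))

lemma moveLeaf_adj (T : SimpleGraph V) {s x xm : V} (u v : V) (h1 : s ≠ x) (h2 : s ≠ xm) :
    (moveLeaf T s x xm).Adj u v ↔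
    (T.Adj u v ∧ u ≠ s ∧ v ≠ s ∧ ¬ (u = x ∧ v = xm) ∧ ¬ (u = xm ∧ v = x)) ∨
      (u = s ∧ (v = x ∨ v = xm)) ∨ (v = s ∧ (u = x ∨ u = xm)) := by
  have hc := T.adj_comm u v
  have hne : T.Adj u v → u ≠ v := fun h => h.ne
  simp only [moveLeaf, SimpleGraph.fromRel_adj]
  rw [T.adj_comm v u]
  constructor
  · rintro ⟨h0, h | h⟩ <;> grind
  · intro h
    refine ⟨?_, ?_⟩ <;> grind

/-- Vertices joined to a leaf by a walk without branch vertices. -/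
inductive Twig [Fintype V] (T : SimpleGraph V) : V → Prop
  | leaf (v : V) (h : T.degree v = 1) : Twig T v
  | step (u v : V) (h : Twig T u) (ha : T.Adj u v) (hd : T.degree v < 3) : Twig T v

lemma Twig.lt [Fintype V] {T : SimpleGraph V} {v : V} (h : Twig T v) : T.degree v < 3 := by
  cases h with
  | leaf _ h => omega
  | step _ _ _ _ h => exact h

lemma Twig.walk [Fintype V] {T : SimpleGraph V} {v : V} (h : Twig T v) :
    ∃ y, T.degree y = 1 ∧ ∃ q : T.Walk y v, ∀ w ∈ q.support, T.degree w < 3 := by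
  induction h with
  | leaf v h => exact ⟨v, h, Walk.nil, by simp [h]⟩
  | step u v h ha hd ih =>
    obtain ⟨y, hy, q, hq⟩ := ih
    refine ⟨y, hy, q.concat ha, ?_⟩
    intro w hw
    rw [Walk.support_concat] at hw
    simp at hw
    rcases hw with hw | rfl
    · exact hq w hw
    · exact hd

lemma Twig.of_walk [Fintype V] {T : SimpleGraph V} {u v : V} (q : T.Walk u v) (h : Twig T u)
    (hq : ∀ w ∈ q.support, T.degree w < 3) : Twig T v := by
  induction q with
  | nil => exact h
  | cons ha q ih =>
    apply ih
    · exact Twig.step _ _ h ha (hq _ (by simp))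
    · intro w hw
      exact hq w (by simp [hw])

lemma mem_rstem_iff [Fintype V] (T : SimpleGraph V) (v : V) :
    (∀ x : V, T.degree x = 1 → ∀ p : T.Walk x v, p.IsPath →
    ∃ w ∈ p.support, 3 ≤ T.degree w) ↔ ¬ Twig T v := by
  constructor
  · intro h ht
    obtain ⟨y, hy, q, hq⟩ := ht.walk
    obtain ⟨w, hw, hd⟩ := h y hy q.bypass q.bypass_isPath
    have := hq w (q.support_bypass_subset_support hw)
    omega
  · intro h x hx p _
    by_contra! hcon
    exact h (Twig.of_walk p (Twig.leaf x hx) hcon)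

lemma inner_nbrs [Fintype V] {T : SimpleGraph V} {b r : V} (p : T.Walk b r) (hp : p.IsPath)
    (hb : 3 ≤ T.degree b) (hr : 3 ≤ T.degree r) (w : V) (hw : w ∈ p.support)
    (hd : T.degree w < 3) : T.degree w ≠ 1 ∧ ∀ z, T.Adj w z → z ∈ p.support := by
  obtain ⟨i, hi, hil⟩ := Walk.mem_support_iff_exists_getVert.mp hw
  have h0 : i ≠ 0 := by
    rintro rfl
    simp at hi
    subst hi; omega
  have hl : i ≠ p.length := by
    rintro rfl
    simp at hi
    subst hi; omega
  obtain ⟨j, rfl⟩ : ∃ j, i = j + 1 := ⟨i - 1, by omega⟩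
  have a1 : T.Adj w (p.getVert j) := by
    rw [← hi]; exact (p.adj_getVert_succ (by omega)).symm
  have a2 : T.Adj w (p.getVert (j+2)) := by
    rw [← hi]; exact (p.adj_getVert_succ (by omega))
  have hne : p.getVert j ≠ p.getVert (j+2) := by
    intro h
    have := hp.getVert_injOn (by simp; omega) (by simp; omega) h
    omega
  have hsub : ({p.getVert j, p.getVert (j+2)} : Finset V) ⊆ T.neighborFinset w := by
    intro z hz
    simp at hz
    rcases hz with rfl | rfl <;> simpa
  have hc := Finset.card_pair hne
  have hle := Finset.card_le_card hsub
  rw [hc, T.card_neighborFinset_eq_degree] at hle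
  refine ⟨by omega, ?_⟩
  intro z hz
  have he := Finset.eq_of_subset_of_card_le hsub (by
    rw [hc, T.card_neighborFinset_eq_degree]; omega)
  have : z ∈ T.neighborFinset w := by simpa
  rw [← he] at this
  simp at this
  rcases this with rfl | rfl <;> exact Walk.getVert_mem_support _ _

lemma inner_not_twig [Fintype V] {T : SimpleGraph V} {b r : V} (p : T.Walk b r) (hp : p.IsPath)
    (hb : 3 ≤ T.degree b) (hr : 3 ≤ T.degree r) (w : V) (h : Twig T w) : w ∉ p.support := by
  induction h with
  | leaf v h => exact fun hv => (inner_nbrs p hp hb hr v hv (by omega)).1 h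
  | step u v h ha hd ih => exact fun hv => ih ((inner_nbrs p hp hb hr v hv hd).2 u ha.symm)

section move
variable [Fintype V] {T : SimpleGraph V} {s x xm t : V}

lemma deg_s (h1 : s ≠ x) (h2 : s ≠ xm) (h3 : x ≠ xm) :
    (moveLeaf T s x xm).degree s = 2 := by
  rw [← card_neighborFinset_eq_degree]
  have : (moveLeaf T s x xm).neighborFinset s = {x, xm} := by
    ext v
    rw [mem_neighborFinset, moveLeaf_adj T s v h1 h2]
    simp
    grind
  rw [this, Finset.card_pair h3]

lemma deg_other (h1 : s ≠ x) (h2 : s ≠ xm) (hst : ∀ v, T.Adj s v ↔ v = t)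
    (hx : T.Adj xm x) (u : V) (hus : u ≠ s) :
    (moveLeaf T s x xm).degree u + (if u = t then 1 else 0) = T.degree u := by
  have hst' : ∀ v, T.Adj v s ↔ v = t := fun v => by rw [T.adj_comm, hst]
  have h3 := hx.ne
  have hx' := hx.symm
  rw [← card_neighborFinset_eq_degree, ← card_neighborFinset_eq_degree]
  have key : ∀ v, (moveLeaf T s x xm).Adj u v ↔
      (T.Adj u v ∧ v ≠ s ∧ ¬ (u = x ∧ v = xm) ∧ ¬ (u = xm ∧ v = x)) ∨
       (v = s ∧ (u = x ∨ u = xm)) := by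
    intro v
    rw [moveLeaf_adj T u v h1 h2]
    grind
  have aux : ∀ a c : V, T.Adj a c → a ≠ s → c ≠ s →
      (insert s ((T.neighborFinset a).erase c)).card + (if a = t then 1 else 0)
        = (T.neighborFinset a).card := by
    intro a c hac ha hc
    have hm : c ∈ T.neighborFinset a := by simpa
    have hcard := Finset.card_erase_add_one hm
    split_ifs with hat
    · rw [Finset.insert_eq_of_mem, hcard]
      simp [hst', hat, hc.symm]
    · rw [Finset.card_insert_of_notMem, hcard]
      simp [hst', hat]
  by_cases hux : u = x
  · subst hux
    rw [← aux u xm hx' hus h2.symm]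
    congr 2
    ext v
    rw [mem_neighborFinset, key]
    simp
    grind
  by_cases hum : u = xm
  · subst hum
    rw [← aux u x hx hus h1.symm]
    congr 2
    ext v
    rw [mem_neighborFinset, key]
    simp
    grind
  have : (moveLeaf T s x xm).neighborFinset u = (T.neighborFinset u).erase s := by
    ext v
    rw [mem_neighborFinset, key]
    simp [hux, hum]
    grind
  rw [this]
  split_ifs with hut
  · apply Finset.card_erase_add_one
    simp [hst', hut]
  · rw [Finset.erase_eq_of_notMem, add_zero]
    simp [hst', hut]

lemma move_tree (hTree : T.IsTree) (h1 : s ≠ x) (h2 : s ≠ xm)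
    (hs : T.degree s = 1) (hst : ∀ v, T.Adj s v ↔ v = t)
    (hx : T.Adj xm x) : (moveLeaf T s x xm).IsTree := by
  have hts : t ≠ s := ((hst t).2 rfl).ne'
  rw [isTree_iff_connected_and_card]
  constructor
  · have asx : (moveLeaf T s x xm).Adj s x := by
      rw [moveLeaf_adj T _ _ h1 h2]; simp
    have asm : (moveLeaf T s x xm).Adj s xm := by
      rw [moveLeaf_adj T _ _ h1 h2]; simp
    have hstep : ∀ u v, T.Adj u v → u ≠ s → v ≠ s → (moveLeaf T s x xm).Reachable u v := by
      intro u v huv hu hv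
      by_cases c1 : u = x ∧ v = xm
      · rw [c1.1, c1.2]
        exact asx.symm.reachable.trans asm.reachable
      by_cases c2 : u = xm ∧ v = x
      · rw [c2.1, c2.2]
        exact asm.symm.reachable.trans asx.reachable
      apply Adj.reachable
      rw [moveLeaf_adj T _ _ h1 h2]
      exact Or.inl ⟨huv, hu, hv, c1, c2⟩
    have hc := hTree.connected.induce_compl_singleton_of_degree_eq_one hs
    have hreach : ∀ u : V, (moveLeaf T s x xm).Reachable x u := by
      intro u
      by_cases hu : u = s
      · rw [hu]; exact asx.symm.reachable
      obtain ⟨q⟩ := hc.preconnected ⟨x, by simpa using h1.symm⟩ ⟨u, by simpa using hu⟩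
      have : ∀ (a c : ({s}ᶜ : Set V)) (q : (T.induce {s}ᶜ).Walk a c),
          (moveLeaf T s x xm).Reachable a.1 c.1 := by
        intro a c q
        induction q with
        | nil => rfl
        | @cons a c d h q ih =>
          exact (hstep a.1 c.1 (by simpa using h) a.2 c.2).trans ih
      exact this _ _ q
    haveI : Nonempty V := ⟨x⟩
    exact ⟨fun u v => (hreach u).symm.trans (hreach v)⟩
  · have hcard := (isTree_iff_connected_and_card.mp hTree).2
    rw [← hcard]
    congr 1
    have e1 := (moveLeaf T s x xm).sum_degrees_eq_twice_card_edges
    have e2 := T.sum_degrees_eq_twice_card_edges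
    have hsum : ∑ u, (moveLeaf T s x xm).degree u = ∑ u, T.degree u := by
      have : ∑ u, ((moveLeaf T s x xm).degree u + (if u = t then 1 else 0)) =
          ∑ u, (T.degree u + if u = s then 1 else 0) := by
        apply Finset.sum_congr rfl
        intro u _
        by_cases hu : u = s
        · subst hu
          rw [deg_s h1 h2 hx.ne', hs]
          simp [hts.symm]
        · rw [deg_other h1 h2 hst hx u hu]
          simp [hu]
      simpa [Finset.sum_add_distrib] using this
    rw [Nat.card_eq_fintype_card, Nat.card_eq_fintype_card, ← edgeFinset_card, ← edgeFinset_card]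
    omega

end move

/-- Let `T` be a spanning tree of the connected graph `G` chosen so that (C1)
`|L(T)|` is minimum and (C2) `|V(R_Stem(T))|` is maximum subject to (C1), with
`B(T) ≠ ∅`. Let `b, r` be branch vertices such that `P_T[b,r]` contains no branch vertex
other than `b` and `r`, let `s` be a leaf, let `x ≠ b` be a vertex of `P_T[b,r]` and `xm`
its predecessor on `P_T[b,r]` oriented from `b` to `r`. If `sx ∈ E(G)` then `s xm ∉ E(G)`. -/
theorem stmt11 {V : Type*} [Fintype V] (G T : SimpleGraph V) (hG : G.Connected)
    (hT : T ≤ G) (hTree : T.IsTree)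
    (hC1 : ∀ T' : SimpleGraph V, T' ≤ G → T'.IsTree →
      (leafSet T).card ≤ (leafSet T').card)
    (hC2 : ∀ T' : SimpleGraph V, T' ≤ G → T'.IsTree →
      (leafSet T').card = (leafSet T).card → rstemCard T' ≤ rstemCard T)
    (hB : (branchSet T).Nonempty)
    (b r : V) (hb : b ∈ branchSet T) (hr : r ∈ branchSet T) (hbr : b ≠ r)
    (p : T.Walk b r) (hp : p.IsPath)
    (hint : ∀ v ∈ p.support, 3 ≤ T.degree v → v = b ∨ v = r)
    (s x xm : V) (hs : s ∈ leafSet T) (hxb : x ≠ b)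
    (hpred : [xm, x] <:+: p.support)
    (hsx : G.Adj s x) :
    ¬ G.Adj s xm := by
  intro hsm
  have hb' : 3 ≤ T.degree b := by simpa [branchSet] using hb
  have hr' : 3 ≤ T.degree r := by simpa [branchSet] using hr
  have hs1 : T.degree s = 1 := by simpa [leafSet] using hs
  have hx : T.Adj xm x := by
    have := p.isChain_adj_support.infix hpred
    simpa using this
  have hxs : x ∈ p.support := hpred.subset (by simp)
  have hms : xm ∈ p.support := hpred.subset (by simp)
  have h1 := hsx.ne
  have h2 := hsm.ne
  obtain ⟨t, ht⟩ : ∃ t, T.neighborFinset s = {t} := by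
    rw [← Finset.card_eq_one, card_neighborFinset_eq_degree, hs1]
  have hst : ∀ v, T.Adj s v ↔ v = t := by
    intro v
    rw [← mem_neighborFinset, ht, Finset.mem_singleton]
  have hadj : T.Adj s t := (hst t).2 rfl
  have hts : t ≠ s := hadj.ne'
  have hle : moveLeaf T s x xm ≤ G := by
    intro u v h
    rw [moveLeaf_adj T _ _ h1 h2] at h
    rcases h with h | ⟨rfl, rfl | rfl⟩ | ⟨rfl, rfl | rfl⟩
    · exact hT h.1
    · exact hsx
    · exact hsm
    · exact hsx.symm
    · exact hsm.symm
  have htree := move_tree hTree h1 h2 hs1 hst hx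
  have dS : (moveLeaf T s x xm).degree s = 2 := deg_s h1 h2 hx.ne'
  have dT : (moveLeaf T s x xm).degree t + 1 = T.degree t := by
    simpa using deg_other h1 h2 hst hx t hts
  have dO : ∀ u, u ≠ s → u ≠ t → (moveLeaf T s x xm).degree u = T.degree u := by
    intro u hu hut
    simpa [hut] using deg_other h1 h2 hst hx u hu
  have hpos : 0 < (moveLeaf T s x xm).degree t := by
    haveI : Nontrivial V := ⟨b, r, hbr⟩
    exact htree.connected.preconnected.degree_pos_of_nontrivial t
  have hC := hC1 _ hle htree
  by_cases h3 : 3 ≤ T.degree t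
  · have : leafSet (moveLeaf T s x xm) ⊆ (leafSet T).erase s := by
      intro u hu
      simp only [leafSet, Finset.mem_filter, Finset.mem_univ, true_and, Finset.mem_erase] at hu ⊢
      have hus : u ≠ s := by rintro rfl; omega
      have hut : u ≠ t := by rintro rfl; omega
      exact ⟨hus, by rw [← dO u hus hut, hu]⟩
    have := Finset.card_le_card this
    have := Finset.card_erase_lt_of_mem hs
    omega
  have h2' : T.degree t = 2 := by omega
  have htl : t ∉ (leafSet T).erase s := by simp [leafSet, h2']
  have hL : leafSet (moveLeaf T s x xm) = insert t ((leafSet T).erase s) := by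
    ext u
    simp only [leafSet, Finset.mem_filter, Finset.mem_univ, true_and, Finset.mem_erase,
      Finset.mem_insert]
    by_cases hus : u = s
    · subst hus; simp [dS, hts.symm]
    by_cases hut : u = t
    · subst hut; simp; omega
    simp [hus, hut, dO u hus hut]
  have hLc : (leafSet (moveLeaf T s x xm)).card = (leafSet T).card := by
    rw [hL, Finset.card_insert_of_notMem htl, Finset.card_erase_add_one hs]
  have hR := hC2 _ hle htree hLc
  have hinv : ∀ u, Twig (moveLeaf T s x xm) u → Twig T u ∧ u ≠ s := by
    intro u hu
    induction hu with
    | leaf v h =>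
      have hvs : v ≠ s := by rintro rfl; omega
      refine ⟨?_, hvs⟩
      by_cases hvt : v = t
      · subst hvt
        exact Twig.step s v (Twig.leaf s hs1) hadj (by omega)
      · exact Twig.leaf v (by rw [← dO v hvs hvt, h])
    | step u v h ha hd ih =>
      have hnp := inner_not_twig p hp hb' hr' u ih.1
      rw [moveLeaf_adj T _ _ h1 h2] at ha
      rcases ha with ha | ⟨rfl, -⟩ | ⟨-, rfl | rfl⟩
      · refine ⟨Twig.step u v ih.1 ha.1 ?_, ha.2.2.1⟩
        by_cases hvt : v = t
        · subst hvt; omega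
        · rw [← dO v ha.2.2.1 hvt]; exact hd
      · exact absurd rfl ih.2
      · exact absurd hxs hnp
      · exact absurd hms hnp
  have hlt : rstemCard T < rstemCard (moveLeaf T s x xm) := by
    unfold rstemCard
    simp only [mem_rstem_iff]
    apply Set.ncard_lt_ncard _ (Set.toFinite _)
    rw [Set.ssubset_iff_of_subset]
    · exact ⟨s, fun h => (hinv s h).2 rfl, fun h => h (Twig.leaf s hs1)⟩
    · intro v hv h
      exact hv (hinv v h).1
  omega
end

section
/- Let G be a connected K_{1,4}-free finite simple graph and let T be a spanning tree of G chosen so that (C1) |L(T)| is minimum among all spanning trees of G and (C2) |V(R_Stem(T))| is maximum subject to (C1), and suppose B(T) ≠ ∅. Let b, r be branch vertices of T such that the path P_T[b,r] contains no branch vertex other than b and r, and let x be an internal vertex of P_T[b,r] (x ≠ b and x ≠ r). Then x has at most one neighbor in G belonging to L(T). -/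
open SimpleGraph Finset List

open scoped Classical

variable {V : Type*}

/-- Replace the edge `ab` of `T` by the edge `cd`. -/
def swp (T : SimpleGraph V) (a b c d : V) : SimpleGraph V where
  Adj u v := (T.Adj u v ∧ s(u, v) ≠ s(a, b)) ∨ (s(u, v) = s(c, d) ∧ u ≠ v)
  symm := ⟨by
    intro u v h
    rcases h with ⟨h1, h2⟩ | ⟨h1, h2⟩
    · exact Or.inl ⟨h1.symm, by rwa [Sym2.eq_swap]⟩
    · exact Or.inr ⟨by rwa [Sym2.eq_swap], h2.symm⟩⟩
  loopless := ⟨by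
    intro u h
    rcases h with ⟨h1, h2⟩ | ⟨h1, h2⟩
    · exact h1.ne rfl
    · exact h2 rfl⟩

lemma swp_adj (T : SimpleGraph V) (a b c d u v : V) : (swp T a b c d).Adj u v ↔
    (T.Adj u v ∧ ¬ (u = a ∧ v = b) ∧ ¬ (u = b ∧ v = a)) ∨
      (((u = c ∧ v = d) ∨ (u = d ∧ v = c)) ∧ u ≠ v) := by
  simp only [swp, Sym2.eq_iff, ne_eq, not_or]

lemma degree_eq_sum [Fintype V] (T : SimpleGraph V) (v : V) :
    T.degree v = ∑ w, if T.Adj v w then 1 else 0 := by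
  rw [← card_neighborFinset_eq_degree, Finset.sum_boole]
  simp only [Nat.cast_id]
  congr 1
  ext w
  simp

lemma swp_degree [Fintype V] (T : SimpleGraph V) {a b c d : V} (hab : T.Adj a b)
    (hcd : ¬ T.Adj c d) (hne : c ≠ d) (v : V) :
    (swp T a b c d).degree v + ((if v = a then 1 else 0) + (if v = b then 1 else 0)) =
      T.degree v + ((if v = c then 1 else 0) + (if v = d then 1 else 0)) := by
  have key : ∀ w, (if (swp T a b c d).Adj v w then 1 else 0) +
      ((if v = a ∧ w = b then 1 else 0) + (if v = b ∧ w = a then 1 else 0)) =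
      (if T.Adj v w then 1 else 0) +
      ((if v = c ∧ w = d then 1 else 0) + (if v = d ∧ w = c then 1 else 0)) := by
    intro w
    have h1 := hab.ne
    have h2 := hab.symm
    have h3 : ¬ T.Adj d c := fun h => hcd h.symm
    simp only [swp_adj]
    by_cases e1 : v = a ∧ w = b
    · obtain ⟨rfl, rfl⟩ := e1
      grind
    by_cases e2 : v = b ∧ w = a
    · obtain ⟨rfl, rfl⟩ := e2
      grind
    by_cases e3 : v = c ∧ w = d
    · obtain ⟨rfl, rfl⟩ := e3
      grind
    by_cases e4 : v = d ∧ w = c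
    · obtain ⟨rfl, rfl⟩ := e4
      grind
    simp [e1, e2, e3, e4]
  have := Finset.sum_congr (rfl : (Finset.univ : Finset V) = Finset.univ) (fun w _ => key w)
  simp only [Finset.sum_add_distrib] at this
  rw [← degree_eq_sum, ← degree_eq_sum] at this
  have aux : ∀ y z : V, (∑ w, if v = y ∧ w = z then 1 else 0) = if v = y then 1 else 0 := by
    intro y z
    by_cases h : v = y <;> simp [h]
  simpa only [aux] using this

lemma swp_tree [Fintype V] {T : SimpleGraph V} (hT : T.IsTree) {a b c d : V} (hab : T.Adj a b)
    (hcd : ¬ T.Adj c d) (hne : c ≠ d) (hr : (swp T a b c d).Reachable a b) :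
    (swp T a b c d).IsTree := by
  have hreach : ∀ u v, T.Reachable u v → (swp T a b c d).Reachable u v := by
    rintro u v ⟨w⟩
    induction w with
    | nil => exact Reachable.refl _
    | @cons u v z h w ih =>
      refine Reachable.trans ?_ ih
      by_cases e1 : u = a ∧ v = b
      · obtain ⟨rfl, rfl⟩ := e1; exact hr
      by_cases e2 : u = b ∧ v = a
      · obtain ⟨rfl, rfl⟩ := e2; exact hr.symm
      exact Adj.reachable ((swp_adj _ _ _ _ _ _ _).2 (Or.inl ⟨h, e1, e2⟩))
  have hc : (swp T a b c d).Connected := by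
    haveI := hT.connected.nonempty
    exact ⟨fun u v => hreach u v (hT.connected.preconnected u v)⟩
  rw [isTree_iff_connected_and_card] at hT ⊢
  refine ⟨hc, ?_⟩
  rw [← hT.2]
  congr 1
  have h1 := sum_degrees_eq_twice_card_edges T
  have h2 := sum_degrees_eq_twice_card_edges (swp T a b c d)
  have := Finset.sum_congr (rfl : (Finset.univ : Finset V) = Finset.univ)
    (fun w _ => swp_degree T hab hcd hne w)
  simp only [Finset.sum_add_distrib] at this
  rw [h1, h2] at this
  simp only [Finset.sum_ite_eq', Finset.mem_univ, if_true] at this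
  rw [Nat.card_eq_fintype_card, Nat.card_eq_fintype_card, ← edgeFinset_card, ← edgeFinset_card]
  omega

lemma swp_le {G T : SimpleGraph V} (hT : T ≤ G) {a b c d : V} (h : G.Adj c d) :
    swp T a b c d ≤ G := by
  intro u v huv
  rw [swp_adj] at huv
  rcases huv with h1 | ⟨⟨rfl, rfl⟩ | ⟨rfl, rfl⟩, _⟩
  · exact hT h1.1
  · exact h
  · exact h.symm

lemma nbr_of_leaf [Fintype V] {T : SimpleGraph V} {s s' z : V} (hs : T.degree s = 1)
    (h : T.Adj s s') (hz : T.Adj s z) : z = s' := by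
  rw [← card_neighborFinset_eq_degree, Finset.card_eq_one] at hs
  obtain ⟨y, hy⟩ := hs
  have h1 : s' ∈ T.neighborFinset s := by simpa
  have h2 : z ∈ T.neighborFinset s := by simpa
  rw [hy, Finset.mem_singleton] at h1 h2
  rw [h1, h2]

lemma nbr_of_two [Fintype V] {T : SimpleGraph V} {x u v z : V} (hx : T.degree x ≤ 2)
    (hu : T.Adj x u) (hv : T.Adj x v) (huv : u ≠ v) (hz : T.Adj x z) : z = u ∨ z = v := by
  by_contra hcon
  push Not at hcon
  have : ({z, u, v} : Finset V) ⊆ T.neighborFinset x := by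
    intro w hw
    simp only [Finset.mem_insert, Finset.mem_singleton] at hw
    rcases hw with rfl | rfl | rfl <;> simpa
  have h := Finset.card_le_card this
  rw [card_neighborFinset_eq_degree, Finset.card_eq_three.2 ⟨z, u, v, hcon.1, hcon.2, huv, rfl⟩] at h
  omega

lemma two_le_degree [Fintype V] {T : SimpleGraph V} {x u v : V}
    (hu : T.Adj x u) (hv : T.Adj x v) (huv : u ≠ v) : 2 ≤ T.degree x := by
  have : ({u, v} : Finset V) ⊆ T.neighborFinset x := by
    intro w hw
    simp only [Finset.mem_insert, Finset.mem_singleton] at hw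
    rcases hw with rfl | rfl <;> simpa
  have h := Finset.card_le_card this
  rwa [card_neighborFinset_eq_degree, Finset.card_pair huv] at h

/-- Moving a leaf keeps a tree. -/
lemma leaf_move [Fintype V] {T : SimpleGraph V} (hT : T.IsTree) {s s' x : V}
    (hs : T.degree s = 1) (hss : T.Adj s s') (hxs : x ≠ s) (hx : x ≠ s') :
    (swp T s s' s x).IsTree := by
  refine swp_tree hT hss (fun h => hx (nbr_of_leaf hs hss h)) hxs.symm ?_
  have h1 : (swp T s s' s x).Adj s x := (swp_adj _ _ _ _ _ _ _).2 (Or.inr ⟨Or.inl ⟨rfl, rfl⟩, hxs.symm⟩)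
  refine h1.reachable.trans ?_
  have hc := hT.connected.induce_compl_singleton_of_degree_eq_one hs
  have hr := hc.preconnected ⟨x, by simpa using hxs⟩ ⟨s', by simpa using hss.ne'⟩
  refine (hr.map (⟨Subtype.val, ?_⟩ : (T.induce {s}ᶜ) →g (swp T s s' s x)))
  rintro ⟨u, hu⟩ ⟨v, hv⟩ huv
  simp only [Set.mem_compl_iff, Set.mem_singleton_iff] at hu hv
  simp only [comap_adj, Function.Embedding.subtype_apply] at huv
  exact (swp_adj _ _ _ _ _ _ _).2 (Or.inl ⟨huv, fun h => hu h.1, fun h => hv h.2⟩)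

/-- An interior vertex of a path has two distinct neighbours on it, one of them on each side. -/
lemma path_interior {T : SimpleGraph V} {b r x : V} (p : T.Walk b r) (hp : p.IsPath)
    (hx : x ∈ p.support) (hxb : x ≠ b) (hxr : x ≠ r) :
    ∃ u v, u ≠ v ∧ T.Adj x u ∧ T.Adj x v ∧ u ∈ p.support ∧ v ∈ p.support ∧
      ∃ (q1 : T.Walk b x) (q2 : T.Walk v r), x ∉ q2.support ∧ v ∉ q1.support := by
  obtain ⟨q, q', rfl⟩ := Walk.mem_support_iff_exists_append.1 hx
  cases q' with
  | nil => exact absurd rfl hxr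
  | @cons _ v _ hv q2 =>
    have hrev : ∃ u, T.Adj x u ∧ u ∈ q.support := by
      have hxb' : ¬ q.reverse.Nil := fun h => hxb h.eq
      refine ⟨q.reverse.snd, Walk.adj_snd hxb', ?_⟩
      have := q.reverse.getVert_mem_support 1
      rwa [Walk.support_reverse, List.mem_reverse] at this
    obtain ⟨u, hu, huq⟩ := hrev
    have hnd := hp.support_nodup
    rw [Walk.support_append, List.nodup_append] at hnd
    obtain ⟨-, h2, h3⟩ := hnd
    simp only [Walk.support_cons, List.tail_cons] at h2 h3
    have hvq : v ∉ q.support := fun h => h3 v h v (Walk.start_mem_support _) rfl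
    have hxq : x ∉ q2.support := fun h => h3 x (Walk.end_mem_support _) x h rfl
    refine ⟨u, v, fun h => hvq (h ▸ huq), hu, hv, ?_, ?_, q, q2, hxq, hvq⟩
    · rw [Walk.mem_support_append_iff]; exact Or.inl huq
    · rw [Walk.mem_support_append_iff]; right; simp

lemma reach_of_walk {T T' : SimpleGraph V} {u v : V} (q : T.Walk u v)
    (h : ∀ y ∈ q.support, ∀ z ∈ q.support, T.Adj y z → T'.Adj y z) : T'.Reachable u v := by
  induction q with
  | nil => exact Reachable.refl _
  | @cons u v w huv q ih =>
    refine Reachable.trans (Adj.reachable (h u (by simp) v (by simp) huv)) ?_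
    exact ih fun y hy z hz => h y (by simp [hy]) z (by simp [hz])

/-- If two leaves of a tree which is not a path are adjacent, there is a tree with fewer leaves. -/
lemma leaves_adj [Fintype V] {G T : SimpleGraph V} (hT : T ≤ G) (hTree : T.IsTree)
    {s t b : V} (hb : 3 ≤ T.degree b) (hs : T.degree s = 1) (ht : T.degree t = 1)
    (hst : G.Adj s t) :
    ∃ T' : SimpleGraph V, T' ≤ G ∧ T'.IsTree ∧ (leafSet T').card < (leafSet T).card := by
  obtain ⟨q, hq⟩ := (hTree.connected.preconnected s t).exists_isPath
  have hne := hst.ne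
  have hnb1 : ∃ u ∈ q.support, T.Adj s u :=
    ⟨q.snd, q.getVert_mem_support 1, Walk.adj_snd fun h => hne h.eq⟩
  have hnb2 : ∃ u ∈ q.support, T.Adj t u := by
    refine ⟨q.reverse.snd, ?_, Walk.adj_snd fun h => hne h.eq.symm⟩
    have := q.reverse.getVert_mem_support 1
    rwa [Walk.support_reverse, List.mem_reverse] at this
  have hex : ∃ w ∈ q.support, 3 ≤ T.degree w := by
    by_contra hcon
    push Not at hcon
    have hcl : ∀ v z, T.Reachable v z → v ∈ q.support → z ∈ q.support := by
      rintro v z ⟨w⟩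
      induction w with
      | nil => exact id
      | @cons u v z h w ih =>
        intro hu
        apply ih
        by_cases h1 : u = s
        · subst h1
          obtain ⟨y, hy, hy'⟩ := hnb1
          exact nbr_of_leaf hs hy' h ▸ hy
        by_cases h2 : u = t
        · subst h2
          obtain ⟨y, hy, hy'⟩ := hnb2
          exact nbr_of_leaf ht hy' h ▸ hy
        obtain ⟨y, z, hyz, hy, hz, hyq, hzq, -⟩ := path_interior q hq hu h1 h2
        have := hcon u hu
        rcases nbr_of_two (by omega) hy hz hyz h with rfl | rfl <;> assumption
    have := hcon b (hcl s b (hTree.connected.preconnected s b) (Walk.start_mem_support _))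
    omega
  obtain ⟨w, hw, hw3⟩ := hex
  have hws : w ≠ s := by rintro rfl; omega
  have hwt : w ≠ t := by rintro rfl; omega
  obtain ⟨u, y, huy, hu, hy, -, -, q1, q2, hwq, hyq⟩ := path_interior q hq hw hws hwt
  have hnst : ¬ T.Adj s t := by
    intro h
    have hcl : ∀ v z, T.Reachable v z → (v = s ∨ v = t) → (z = s ∨ z = t) := by
      rintro v z ⟨w⟩
      induction w with
      | nil => exact id
      | @cons u v z h' w ih =>
        rintro (rfl | rfl)
        · exact ih (Or.inr (nbr_of_leaf hs h h'))
        · exact ih (Or.inl (nbr_of_leaf ht h.symm h'))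
    rcases hcl s w (hTree.connected.preconnected s w) (Or.inl rfl) with h | h
    · exact hws h
    · exact hwt h
  have hr : (swp T w y s t).Reachable w y := by
    have r1 : (swp T w y s t).Reachable s w := reach_of_walk q1 fun c hc d hd hcd =>
      (swp_adj _ _ _ _ _ _ _).2 (Or.inl ⟨hcd, fun h => hyq (h.2 ▸ hd), fun h => hyq (h.1 ▸ hc)⟩)
    have r2 : (swp T w y s t).Reachable y t := reach_of_walk q2 fun c hc d hd hcd =>
      (swp_adj _ _ _ _ _ _ _).2 (Or.inl ⟨hcd, fun h => hwq (h.1 ▸ hc), fun h => hwq (h.2 ▸ hd)⟩)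
    have r3 : (swp T w y s t).Adj s t :=
      (swp_adj _ _ _ _ _ _ _).2 (Or.inr ⟨Or.inl ⟨rfl, rfl⟩, hne⟩)
    exact r1.symm.trans (r3.reachable.trans r2.symm)
  refine ⟨swp T w y s t, swp_le hT hst, swp_tree hTree hy hnst hne hr, ?_⟩
  have hsub : leafSet (swp T w y s t) ⊆ insert y (((leafSet T).erase s).erase t) := by
    intro v hv
    simp only [leafSet, Finset.mem_insert, Finset.mem_erase, Finset.mem_filter,
      Finset.mem_univ, true_and] at hv ⊢
    have hd := swp_degree T hy hnst hne v
    rw [hv] at hd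
    by_cases h1 : v = y
    · exact Or.inl h1
    right
    by_cases h2 : v = w
    · subst h2; simp [hws, hwt, h1] at hd; omega
    by_cases h3 : v = s
    · subst h3; simp [hne, h1, h2] at hd; omega
    by_cases h4 : v = t
    · subst h4; simp [h3, h1, h2] at hd; omega
    simp [h1, h2, h3, h4] at hd ⊢
    omega
  have hsL : s ∈ leafSet T := by simp [leafSet, hs]
  have htL : t ∈ (leafSet T).erase s := by simp [leafSet, ht, hne.symm]
  have c1 := Finset.card_le_card hsub
  have c2 := Finset.card_insert_le y (((leafSet T).erase s).erase t)
  have c3 := Finset.card_erase_add_one hsL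
  have c4 := Finset.card_erase_add_one htL
  omega

/-- The case where the two tree neighbours of `x` are adjacent. -/
lemma case_nbrs_adj [Fintype V] {G T : SimpleGraph V} (hT : T ≤ G) (hTree : T.IsTree)
    {x u v s t b : V} (hb : 3 ≤ T.degree b) (hx : T.degree x = 2)
    (hu : T.Adj x u) (hv : T.Adj x v) (huv : u ≠ v) (hG : G.Adj u v)
    (hs : T.degree s = 1) (ht : T.degree t = 1) (hst : s ≠ t)
    (hsu : s ≠ u) (hsv : s ≠ v)
    (hxs : G.Adj x s) (hxt : G.Adj x t) :
    ∃ T' : SimpleGraph V, T' ≤ G ∧ T'.IsTree ∧ (leafSet T').card < (leafSet T).card := by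
  have hnuv : ¬ T.Adj u v := by
    intro h
    have hp1 : (Walk.cons h Walk.nil : T.Walk u v).IsPath := by simp [huv]
    have hp2 : (Walk.cons hu.symm (Walk.cons hv Walk.nil) : T.Walk u v).IsPath := by
      simp [huv, hu.ne', hv.ne]
    have := (hTree.existsUnique_path u v).unique hp1 hp2
    have := congrArg Walk.length this
    simp at this
  have hxs' := hxs.ne
  have hxt' := hxt.ne
  have t1 : (swp T x u u v).IsTree := by
    refine swp_tree hTree hu hnuv huv ?_
    have a1 : (swp T x u u v).Adj u v :=
      (swp_adj _ _ _ _ _ _ _).2 (Or.inr ⟨Or.inl ⟨rfl, rfl⟩, huv⟩)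
    have a2 : (swp T x u u v).Adj x v :=
      (swp_adj _ _ _ _ _ _ _).2 (Or.inl ⟨hv, fun h => huv h.2.symm, fun h => hu.ne h.1⟩)
    exact a2.reachable.trans a1.symm.reachable
  have d1 := swp_degree T hu hnuv huv
  have l1 : (swp T x u u v).degree x = 1 := by
    have := d1 x
    simp [hu.ne, hv.ne] at this
    omega
  have a2 : (swp T x u u v).Adj x v :=
    (swp_adj _ _ _ _ _ _ _).2 (Or.inl ⟨hv, fun h => huv h.2.symm, fun h => hu.ne h.1⟩)
  have t2 := leaf_move t1 l1 a2 hxs'.symm hsv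
  have n2 : ¬ (swp T x u u v).Adj x s := fun h => hsv (nbr_of_leaf l1 a2 h)
  have d2 := swp_degree _ a2 n2 hxs'
  have le2 : swp (swp T x u u v) x v x s ≤ G := swp_le (swp_le hT hG) hxs
  have deg : ∀ w, w ≠ x → w ≠ s → (swp (swp T x u u v) x v x s).degree w = T.degree w := by
    intro w h1 h2
    have e1 := d1 w
    have e2 := d2 w
    simp only [h1, h2, if_false] at e1 e2
    omega
  have degx : (swp (swp T x u u v) x v x s).degree x = 1 := by
    have e2 := d2 x
    simp [hxs', hv.ne] at e2
    omega
  have degs : (swp (swp T x u u v) x v x s).degree s = 2 := by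
    have e1 := d1 s
    have e2 := d2 s
    simp [hxs'.symm, hsu, hsv] at e1 e2
    omega
  obtain ⟨T', h1, h2, h3⟩ := leaves_adj le2 t2
    (b := b) (s := x) (t := t) (by
      rw [deg b]
      · exact hb
      · rintro rfl; omega
      · rintro rfl; omega) degx (by rw [deg t hxt'.symm hst.symm]; exact ht) hxt
  refine ⟨T', h1, h2, lt_of_lt_of_le h3 ?_⟩
  have hsub : leafSet (swp (swp T x u u v) x v x s) ⊆ insert x ((leafSet T).erase s) := by
    intro w hw
    simp only [leafSet, Finset.mem_insert, Finset.mem_erase, Finset.mem_filter,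
      Finset.mem_univ, true_and] at hw ⊢
    by_cases h1 : w = x
    · exact Or.inl h1
    by_cases h2 : w = s
    · subst h2; omega
    rw [deg w h1 h2] at hw
    exact Or.inr ⟨h2, hw⟩
  have hsL : s ∈ leafSet T := by simp [leafSet, hs]
  have c1 := Finset.card_le_card hsub
  have c2 := Finset.card_insert_le x ((leafSet T).erase s)
  have c3 := Finset.card_erase_add_one hsL
  omega

/-- Vertices outside of the reducible stem, reached from a leaf along non-branch vertices. -/
inductive Bad [Fintype V] (T : SimpleGraph V) : V → Prop
  | leaf (v : V) : T.degree v = 1 → Bad T v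
  | step (u v : V) : Bad T u → T.Adj u v → T.degree v < 3 → Bad T v

lemma bad_iff [Fintype V] (T : SimpleGraph V) (v : V) :
    Bad T v ↔ ∃ x : V, T.degree x = 1 ∧ ∃ p : T.Walk x v, p.IsPath ∧
      ∀ w ∈ p.support, T.degree w < 3 := by
  constructor
  · intro h
    suffices ∃ x : V, T.degree x = 1 ∧ ∃ p : T.Walk x v, ∀ w ∈ p.support, T.degree w < 3 by
      obtain ⟨x, hx, p, hp⟩ := this
      exact ⟨x, hx, p.toPath, p.toPath.2, fun w hw => hp w (Walk.support_toPath_subset p hw)⟩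
    induction h with
    | leaf v hv => exact ⟨v, hv, Walk.nil, by simp [hv]⟩
    | step u v _ huv hv ih =>
      obtain ⟨x, hx, p, hp⟩ := ih
      refine ⟨x, hx, p.concat huv, ?_⟩
      intro w hw
      rw [Walk.support_concat] at hw
      simp only [List.concat_eq_append, List.mem_append, List.mem_singleton] at hw
      rcases hw with hw | rfl
      · exact hp w hw
      · exact hv
  · rintro ⟨x, hx, p, -, hp⟩
    have hbx : Bad T x := Bad.leaf x hx
    clear hx
    induction p with
    | nil => exact hbx
    | @cons u v w huv q ih =>
      exact ih (fun w hw => hp w (by simp [hw])) (Bad.step _ _ hbx huv (hp v (by simp)))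

lemma rstemCard_eq [Fintype V] (T : SimpleGraph V) : rstemCard T = {v : V | ¬ Bad T v}.ncard := by
  unfold rstemCard
  congr 1
  ext v
  simp only [Set.mem_setOf_eq, bad_iff]
  push Not
  rfl

/-- The case where a leaf is adjacent to both ends of an edge of the reducible stem. -/
lemma case_triangle [Fintype V] {G T : SimpleGraph V} (hT : T ≤ G) (hTree : T.IsTree)
    (hC1 : ∀ T' : SimpleGraph V, T' ≤ G → T'.IsTree →
      (leafSet T).card ≤ (leafSet T').card)
    (hC2 : ∀ T' : SimpleGraph V, T' ≤ G → T'.IsTree →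
      (leafSet T').card = (leafSet T).card → rstemCard T' ≤ rstemCard T)
    {x y s : V} (hx : T.degree x < 3) (hxy : T.Adj x y) (hbx : ¬ Bad T x) (hby : ¬ Bad T y)
    (hs : T.degree s = 1) (hxs : G.Adj x s) (hys : G.Adj y s) : False := by
  have hsx := hxs.ne'
  have hsy := hys.ne'
  have hsbad : Bad T s := Bad.leaf s hs
  have hxy' := hxy.ne
  obtain ⟨s', hss'⟩ : ∃ s', T.Adj s s' := by
    rw [← T.degree_pos_iff_exists_adj]; omega
  have hpx : x ≠ s' := by
    rintro rfl
    exact hbx (Bad.step _ _ hsbad hss' hx)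
  have hnsx : ¬ T.Adj s x := fun h => hpx (nbr_of_leaf hs hss' h)
  have hsL : s ∈ leafSet T := by simp [leafSet, hs]
  have c3 := Finset.card_erase_add_one hsL
  by_cases hpy : y = s'
  · subst hpy
    have hy3 : 3 ≤ T.degree y := by
      by_contra h
      exact hby (Bad.step _ _ hsbad hss' (by omega))
    have hn : ¬ T.Adj x s := fun h => hnsx h.symm
    have tr : (swp T x y x s).IsTree := by
      refine swp_tree hTree hxy hn hsx.symm ?_
      have a1 : (swp T x y x s).Adj x s :=
        (swp_adj _ _ _ _ _ _ _).2 (Or.inr ⟨Or.inl ⟨rfl, rfl⟩, hsx.symm⟩)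
      have a2 : (swp T x y x s).Adj s y :=
        (swp_adj _ _ _ _ _ _ _).2 (Or.inl ⟨hss', fun h => hsx h.1, fun h => hsy h.1⟩)
      exact a1.reachable.trans a2.reachable
    have h := hC1 _ (swp_le hT hxs) tr
    have hsub : leafSet (swp T x y x s) ⊆ (leafSet T).erase s := by
      intro w hw
      simp only [leafSet, Finset.mem_erase, Finset.mem_filter,
        Finset.mem_univ, true_and] at hw ⊢
      have hd := swp_degree T hxy hn hsx.symm w
      rw [hw] at hd
      by_cases h1 : w = s
      · subst h1; simp [hsx, hsy] at hd; omega
      by_cases h2 : w = y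
      · subst h2; simp [h1, hxy'.symm] at hd; omega
      refine ⟨h1, ?_⟩
      simp [h1, h2] at hd
      omega
    have := Finset.card_le_card hsub
    omega
  have t1 := leaf_move hTree hs hss' hsx.symm hpx
  have d1 := swp_degree T hss' hnsx hsx
  have a1 : (swp T s s' s x).Adj x y :=
    (swp_adj _ _ _ _ _ _ _).2 (Or.inl ⟨hxy, fun h => hsx h.1.symm, fun h => hpx h.1⟩)
  have b1 : (swp T s s' s x).Adj s x :=
    (swp_adj _ _ _ _ _ _ _).2 (Or.inr ⟨Or.inl ⟨rfl, rfl⟩, hsx⟩)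
  have n1 : ¬ (swp T s s' s x).Adj s y := by
    rw [swp_adj]
    rintro (h | ⟨⟨-, h⟩ | ⟨h, -⟩, -⟩)
    · exact hpy (nbr_of_leaf hs hss' h.1)
    · exact hxy' h.symm
    · exact hsx h
  have t2 : (swp (swp T s s' s x) x y s y).IsTree := by
    refine swp_tree t1 a1 n1 hsy ?_
    have e1 : (swp (swp T s s' s x) x y s y).Adj s y :=
      (swp_adj _ _ _ _ _ _ _).2 (Or.inr ⟨Or.inl ⟨rfl, rfl⟩, hsy⟩)
    have e2 : (swp (swp T s s' s x) x y s y).Adj s x :=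
      (swp_adj _ _ _ _ _ _ _).2 (Or.inl ⟨b1, fun h => hsx h.1, fun h => hsy h.1⟩)
    exact e2.symm.reachable.trans e1.reachable
  have d2 := swp_degree _ a1 n1 hsy
  have adj2 : ∀ u w, (swp (swp T s s' s x) x y s y).Adj u w → w ≠ s → u ≠ s → T.Adj u w := by
    intro u w h hw hu
    simp only [swp_adj] at h
    grind
  have adj3 : ∀ u, (swp (swp T s s' s x) x y s y).Adj u s → u = x ∨ u = y := by
    intro u h
    have h4 : T.Adj u s → u = s' := fun h => nbr_of_leaf hs hss' h.symm
    simp only [swp_adj] at h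
    grind
  have le2 : swp (swp T s s' s x) x y s y ≤ G := swp_le (swp_le hT hxs.symm) hys.symm
  have hss := hss'.ne
  have deg : ∀ w, w ≠ s → w ≠ s' → (swp (swp T s s' s x) x y s y).degree w = T.degree w := by
    intro w h1 h2
    have e1 := d1 w
    have e2 := d2 w
    simp only [h1, h2, if_false] at e1 e2
    omega
  have degs : (swp (swp T s s' s x) x y s y).degree s = 2 := by
    have e1 := d1 s
    have e2 := d2 s
    simp [hsx, hsy, hss] at e1 e2
    omega
  have degs' : (swp (swp T s s' s x) x y s y).degree s' + 1 = T.degree s' := by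
    have e1 := d1 s'
    have e2 := d2 s'
    simp [hss.symm, Ne.symm hpx, Ne.symm hpy] at e1 e2
    omega
  generalize swp (swp T s s' s x) x y s y = T' at *
  have hsub : leafSet T' ⊆ insert s' ((leafSet T).erase s) := by
    intro w hw
    simp only [leafSet, Finset.mem_insert, Finset.mem_erase, Finset.mem_filter,
      Finset.mem_univ, true_and] at hw ⊢
    by_cases h1 : w = s'
    · exact Or.inl h1
    by_cases h2 : w = s
    · subst h2; omega
    rw [deg w h2 h1] at hw
    exact Or.inr ⟨h2, hw⟩
  have c0 := hC1 T' le2 t2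
  by_cases hp3 : 3 ≤ T.degree s'
  · have hsub' : leafSet T' ⊆ (leafSet T).erase s := by
      intro w hw
      have h1 := hsub hw
      rw [Finset.mem_insert] at h1
      rcases h1 with rfl | h1
      · simp only [leafSet, Finset.mem_filter, Finset.mem_univ, true_and] at hw
        omega
      · exact h1
    have := Finset.card_le_card hsub'
    omega
  have c1 := Finset.card_le_card hsub
  have c2 := Finset.card_insert_le s' ((leafSet T).erase s)
  have h := hC2 T' le2 t2 (by omega)
  have hbad : ∀ v, Bad T' v → Bad T v ∧ v ≠ s := by
    intro v hv
    induction hv with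
    | leaf v hv =>
      by_cases h1 : v = s'
      · subst h1
        exact ⟨Bad.step _ _ hsbad hss' (by omega), hss.symm⟩
      by_cases h2 : v = s
      · subst h2; omega
      exact ⟨Bad.leaf v (by rw [← deg v h2 h1]; exact hv), h2⟩
    | step u v _ huv hv ih =>
      by_cases h2 : v = s
      · subst h2
        rcases adj3 u huv with rfl | rfl
        · exact absurd ih.1 hbx
        · exact absurd ih.1 hby
      refine ⟨Bad.step u v ih.1 (adj2 u v huv h2 ih.2) ?_, h2⟩
      by_cases h1 : v = s'
      · subst h1; omega
      rw [← deg v h2 h1]; exact hv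
  rw [rstemCard_eq, rstemCard_eq] at h
  have : {v : V | ¬ Bad T v}.ncard < {v : V | ¬ Bad T' v}.ncard := by
    apply Set.ncard_lt_ncard _ (Set.toFinite _)
    refine ⟨fun v hv hv' => hv (hbad v hv').1, fun hle => ?_⟩
    exact hle (show s ∈ {v : V | ¬ Bad T' v} from fun h => (hbad s h).2 rfl) hsbad
  omega

/-- Let `T` be a spanning tree of the connected `K_{1,4}`-free graph `G`
chosen so that (C1) `|L(T)|` is minimum and (C2) `|V(R_Stem(T))|` is maximum subject to
(C1), with `B(T) ≠ ∅`. Let `b, r` be branch vertices such that `P_T[b,r]` contains no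
branch vertex other than `b` and `r`, and let `x` be an internal vertex of `P_T[b,r]`.
Then `x` has at most one neighbor in `G` belonging to `L(T)`. -/
theorem stmt12 {V : Type*} [Fintype V] (G T : SimpleGraph V) (hG : G.Connected)
    (hK : K14Free G) (hT : T ≤ G) (hTree : T.IsTree)
    (hC1 : ∀ T' : SimpleGraph V, T' ≤ G → T'.IsTree →
      (leafSet T).card ≤ (leafSet T').card)
    (hC2 : ∀ T' : SimpleGraph V, T' ≤ G → T'.IsTree →
      (leafSet T').card = (leafSet T).card → rstemCard T' ≤ rstemCard T)
    (hB : (branchSet T).Nonempty)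
    (b r : V) (hb : b ∈ branchSet T) (hr : r ∈ branchSet T) (hbr : b ≠ r)
    (p : T.Walk b r) (hp : p.IsPath)
    (hint : ∀ v ∈ p.support, 3 ≤ T.degree v → v = b ∨ v = r)
    (x : V) (hx : x ∈ p.support) (hxb : x ≠ b) (hxr : x ≠ r) :
    ((leafSet T).filter fun s => G.Adj x s).card ≤ 1 := by
  have hb3 : 3 ≤ T.degree b := by simpa [branchSet] using hb
  have hr3 : 3 ≤ T.degree r := by simpa [branchSet] using hr
  have hbad : ∀ v, Bad T v → v ∉ p.support := by
    intro v hv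
    induction hv with
    | leaf v hv =>
      intro hvp
      have h1 : v ≠ b := by rintro rfl; omega
      have h2 : v ≠ r := by rintro rfl; omega
      obtain ⟨y, z, hyz, hy, hz, -⟩ := path_interior p hp hvp h1 h2
      have := two_le_degree hy hz hyz
      omega
    | step u v _ huv hv ih =>
      intro hvp
      have h1 : v ≠ b := by rintro rfl; omega
      have h2 : v ≠ r := by rintro rfl; omega
      obtain ⟨y, z, hyz, hy, hz, hyp, hzp, -⟩ := path_interior p hp hvp h1 h2
      rcases nbr_of_two (by omega) hy hz hyz huv.symm with rfl | rfl
      · exact ih hyp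
      · exact ih hzp
  obtain ⟨u, v, huv, hu, hv, hup, hvp, -⟩ := path_interior p hp hx hxb hxr
  have hx3 : T.degree x < 3 := by
    by_contra h
    rcases hint x hx (by omega) with h | h
    · exact hxb h
    · exact hxr h
  have hx2 : T.degree x = 2 := by
    have := two_le_degree hu hv huv
    omega
  have gx : ¬ Bad T x := fun h => hbad x h hx
  have gu : ¬ Bad T u := fun h => hbad u h hup
  have gv : ¬ Bad T v := fun h => hbad v h hvp
  by_contra hcon
  rw [not_le, Finset.one_lt_card] at hcon
  obtain ⟨s, hs, t, ht, hst⟩ := hcon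
  simp only [leafSet, Finset.mem_filter, Finset.mem_univ, true_and] at hs ht
  obtain ⟨hs1, hxs⟩ := hs
  obtain ⟨ht1, hxt⟩ := ht
  have nsu : s ≠ u := fun h => gu (h ▸ Bad.leaf s hs1)
  have nsv : s ≠ v := fun h => gv (h ▸ Bad.leaf s hs1)
  have ntu : t ≠ u := fun h => gu (h ▸ Bad.leaf t ht1)
  have ntv : t ≠ v := fun h => gv (h ▸ Bad.leaf t ht1)
  have hmin : ¬ ∃ T' : SimpleGraph V, T' ≤ G ∧ T'.IsTree ∧
      (leafSet T').card < (leafSet T).card := by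
    rintro ⟨T', h1, h2, h3⟩
    exact absurd (hC1 T' h1 h2) (by omega)
  refine hK ⟨x, s, t, u, v, hst, nsu, nsv, ntu, ntv, huv, hxs, hxt, hT hu, hT hv,
    fun h => hmin (leaves_adj hT hTree hb3 hs1 ht1 h), ?_, ?_, ?_, ?_,
    fun h => hmin (case_nbrs_adj hT hTree hb3 hx2 hu hv huv h hs1 ht1 hst nsu nsv hxs hxt)⟩
  · exact fun h => case_triangle hT hTree hC1 hC2 hx3 hu gx gu hs1 hxs h.symm
  · exact fun h => case_triangle hT hTree hC1 hC2 hx3 hv gx gv hs1 hxs h.symm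
  · exact fun h => case_triangle hT hTree hC1 hC2 hx3 hu gx gu ht1 hxt h.symm
  · exact fun h => case_triangle hT hTree hC1 hC2 hx3 hv gx gv ht1 hxt h.symm
end
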